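/- arXiv:2007.11526 — 3 statements merged into one kernel-verified Lean document; each statement's English description precedes it below -/
import Mathlib

section
/- Let d,r be natural numbers with d ≥ 1, and let l₁,…,l_r be r parallel lines in ℝ^d. Suppose A is a finite nonempty d-dimensional subset of ℝ^d with A ⊆ l₁ ∪ ⋯ ∪ l_r and |A ∩ l_i| ≥ 2d² for each 1 ≤ i ≤ r. Then |A-A| ≥ (2d-2)|A| - 1000d³·r. -/
open Finset Pointwise

open Module

/-!
Project `A` along the direction of the lines, and let `C` be the image. By Cauchy–Davenport on each
line, the fibre excesses (numbers of points minus one) `u` of `A` over `C` and `g` of `A - A` over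
`C - C` satisfy `u b + u b' ≤ g (b - b')`. This implies `2 * dim C * ∑ u ≤ ∑ g`, as soon as
`dim X * |X| ≤ |X - X|` for all `X ⊆ C`: peel off level sets to reduce to `u = 1` on some `Y ⊆ C`,
where `g ≥ 2` on `Y - Y` gives `2 * dim Y * |Y|`, and then let `Y` grow to `C` point by point. Each
point `z` outside the current affine span contributes the new translates `z - Y` and `Y - z`, on
which `g ≥ u`.

The bound `dim X * |X| ≤ |X - X|` (strict for nonempty `X`) is proved by induction on the dimension,
projecting along an edge of the convex hull of `X`. The endpoints of the edge have as common image a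
vertex `v` of the image `C` with `u v ≠ 0`, so that `g ≠ 0` on `v - C` and `C - v`, and these sets
meet only in `0`.
-/

section CardLemmas

variable {α β : Type*}

lemma card_mul_add_sum_tsub {s : Finset α} {f : α → ℕ} {k : ℕ} (hf : ∀ a ∈ s, k ≤ f a) :
    #s * k + ∑ a ∈ s, (f a - k) = ∑ a ∈ s, f a := by
  rw [← smul_eq_mul, ← sum_const, ← sum_add_distrib]
  exact sum_congr rfl fun a ha ↦ Nat.add_sub_of_le (hf a ha)

lemma card_filter_ne_zero_add_sum_tsub_one (s : Finset α) (f : α → ℕ) :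
    #{a ∈ s | f a ≠ 0} + ∑ a ∈ s, (f a - 1) = ∑ a ∈ s, f a := by
  rw [card_filter, ← sum_add_distrib]
  refine sum_congr rfl fun a _ ↦ ?_
  split_ifs <;> omega

variable [DecidableEq β]

/-- The number of points of `s` in the fibre of `f` over `b`, not counting the first one
(so `0`, and not `-1`, if the fibre is empty). -/
def fiberExcess (f : α → β) (s : Finset α) (b : β) : ℕ := #{a ∈ s | f a = b} - 1

lemma card_image_add_sum_fiberExcess (f : α → β) (s : Finset α) :
    #(s.image f) + ∑ b ∈ s.image f, fiberExcess f s b = #s := by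
  rw [card_eq_sum_card_image f s, ← card_mul_add_sum_tsub (k := 1) fun b hb ↦
    card_pos.2 (fiber_nonempty_iff_mem_image.2 hb), mul_one]
  rfl

lemma fiberExcess_ne_zero {f : α → β} {s : Finset α} {x y : α} (hx : x ∈ s) (hy : y ∈ s)
    (hxy : x ≠ y) (hf : f y = f x) : fiberExcess f s (f x) ≠ 0 := by
  have : 1 < #{a ∈ s | f a = f x} :=
    one_lt_card.2 ⟨x, mem_filter.2 ⟨hx, rfl⟩, y, mem_filter.2 ⟨hy, hf⟩, hxy⟩
  exact Nat.sub_ne_zero_of_lt this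

end CardLemmas

section TorsionFree

variable {V W : Type*} [AddCommGroup V] [DecidableEq V]

lemma card_add_card_le_card_sub_add_one [IsAddTorsionFree V] {s t : Finset V}
    (hs : s.Nonempty) (ht : t.Nonempty) : #s + #t ≤ #(s - t) + 1 := by
  have := cauchy_davenport_of_isAddTorsionFree hs ht.neg
  rw [← sub_eq_add_neg, card_neg] at this
  omega

lemma image_sub_eq_image_sub_image [AddCommGroup W] [DecidableEq W] {F : Type*} [FunLike F V W]
    [AddMonoidHomClass F V W] (f : F) (s t : Finset V) : (s - t).image f = s.image f - t.image f :=
  image_image₂_distrib (map_sub f)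

lemma fiberExcess_add_fiberExcess_le [IsAddTorsionFree V] [AddCommGroup W] [DecidableEq W]
    {F : Type*} [FunLike F V W] [AddMonoidHomClass F V W] (f : F) (A : Finset V) {b b' : W}
    (hb : b ∈ A.image f) (hb' : b' ∈ A.image f) :
    fiberExcess f A b + fiberExcess f A b' ≤ fiberExcess f (A - A) (b - b') := by
  have hne := fiber_nonempty_iff_mem_image.2 hb
  have hne' := fiber_nonempty_iff_mem_image.2 hb'
  have hsub : {a ∈ A | f a = b} - {a ∈ A | f a = b'} ⊆ {c ∈ A - A | f c = b - b'} := by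
    intro c hc
    obtain ⟨a, ha, a', ha', rfl⟩ := mem_sub.1 hc
    rw [mem_filter] at ha ha' ⊢
    exact ⟨sub_mem_sub ha.1 ha'.1, by rw [map_sub, ha.2, ha'.2]⟩
  have := (card_add_card_le_card_sub_add_one hne hne').trans
    (Nat.add_le_add_right (card_le_card hsub) 1)
  have := hne.card_pos
  have := hne'.card_pos
  unfold fiberExcess
  omega

lemma two_mul_card_le_card_filter_sub_add_one {M : Type*} [AddCommGroup M] [LinearOrder M]
    [IsOrderedAddMonoid M] {C : Finset V} {v : V} (hv : v ∈ C) (ψ : V →+ M)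
    (hψ : ∀ c ∈ C, c ≠ v → ψ c < ψ v) {p : V → Prop} [DecidablePred p]
    (hp : ∀ c ∈ C, p (v - c) ∧ p (c - v)) : 2 * #C ≤ #{c ∈ C - C | p c} + 1 := by
  have hdisj : Disjoint (C.image (v - ·)) ((C.erase v).image (· - v)) := by
    refine disjoint_left.2 fun e he he' ↦ ?_
    obtain ⟨c, hc, rfl⟩ := mem_image.1 he
    obtain ⟨c', hc', h⟩ := mem_image.1 he'
    have hpos : 0 ≤ ψ (v - c) := by
      rw [map_sub, sub_nonneg]
      obtain rfl | hcv := eq_or_ne c v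
      exacts [le_rfl, (hψ c hc hcv).le]
    have hneg : ψ (c' - v) < 0 := by
      rw [map_sub, sub_neg]
      exact hψ c' (mem_of_mem_erase hc') (ne_of_mem_erase hc')
    exact (h ▸ hneg).not_ge hpos
  have hsub : C.image (v - ·) ∪ (C.erase v).image (· - v) ⊆ {c ∈ C - C | p c} := by
    refine union_subset (image_subset_iff.2 fun c hc ↦ ?_) (image_subset_iff.2 fun c hc ↦ ?_)
    · exact mem_filter.2 ⟨sub_mem_sub hv hc, (hp c hc).1⟩
    · have hc := mem_of_mem_erase hc
      exact mem_filter.2 ⟨sub_mem_sub hc hv, (hp c hc).2⟩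
  have hcard := card_le_card hsub
  rw [card_union_of_disjoint hdisj, card_image_of_injective _ sub_right_injective,
    card_image_of_injective _ sub_left_injective, card_erase_of_mem hv] at hcard
  omega

end TorsionFree

section AffDim

variable (𝕜 : Type*) {V W : Type*} [DivisionRing 𝕜] [AddCommGroup V] [Module 𝕜 V]
  [AddCommGroup W] [Module 𝕜 W]

/-- The dimension of a finite set of points, i.e. of its affine span (`0` for the empty set). -/
noncomputable def affDim (X : Finset V) : ℕ := finrank 𝕜 (vectorSpan 𝕜 (X : Set V))

variable {𝕜}

lemma affDim_mono {X Y : Finset V} (h : X ⊆ Y) : affDim 𝕜 X ≤ affDim 𝕜 Y :=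
  haveI := finiteDimensional_vectorSpan_of_finite 𝕜 Y.finite_toSet
  Submodule.finrank_mono (vectorSpan_mono 𝕜 (coe_subset.2 h))

lemma affDim_lt_card {X : Finset V} (hX : X.Nonempty) : affDim 𝕜 X < #X := by
  classical
  have h := finrank_vectorSpan_image_finset_le 𝕜 id X (Nat.sub_add_cancel hX.card_pos).symm
  rw [image_id] at h
  exact Nat.lt_of_le_pred hX.card_pos h

lemma affDim_image_add_finrank_inf_ker [DecidableEq W] (f : V →ₗ[𝕜] W) (A : Finset V) :
    affDim 𝕜 (A.image f) + finrank 𝕜 ↥(vectorSpan 𝕜 (A : Set V) ⊓ LinearMap.ker f) =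
      affDim 𝕜 A := by
  have := finiteDimensional_vectorSpan_of_finite 𝕜 A.finite_toSet
  have hrank := (f.domRestrict (vectorSpan 𝕜 (A : Set V))).finrank_range_add_finrank_ker
  rwa [LinearMap.range_domRestrict, LinearMap.ker_domRestrict, ← Submodule.finrank_map_subtype_eq,
    Submodule.map_comap_subtype, ← f.toAffineMap_linear, AffineMap.map_vectorSpan,
    LinearMap.coe_toAffineMap, ← coe_image] at hrank

lemma affDim_le_affDim_image_mkQ_span_singleton_add_one (v : V) [DecidableEq (V ⧸ 𝕜 ∙ v)]
    (A : Finset V) : affDim 𝕜 A ≤ affDim 𝕜 (A.image (𝕜 ∙ v).mkQ) + 1 := by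
  rw [← affDim_image_add_finrank_inf_ker (𝕜 ∙ v).mkQ A, Submodule.ker_mkQ]
  gcongr
  exact (Submodule.finrank_mono inf_le_right).trans
    (by simpa using finrank_span_le_card (R := 𝕜) {v})

lemma affDim_image_mkQ_span_singleton_add_one {v : V} [DecidableEq (V ⧸ 𝕜 ∙ v)] (hv : v ≠ 0)
    {A : Finset V} (hvA : v ∈ vectorSpan 𝕜 (A : Set V)) :
    affDim 𝕜 (A.image (𝕜 ∙ v).mkQ) + 1 = affDim 𝕜 A := by
  rw [← affDim_image_add_finrank_inf_ker (𝕜 ∙ v).mkQ A, Submodule.ker_mkQ,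
    inf_eq_right.2 ((Submodule.span_singleton_le_iff_mem _ _).2 hvA), finrank_span_singleton hv]

end AffDim

section Weights

variable {𝕜 V : Type*} [DivisionRing 𝕜] [CharZero 𝕜] [AddCommGroup V] [Module 𝕜 V]
  [DecidableEq V]

lemma sum_sub_self_add_sum_le_sum_insert {Z : Finset V} {z : V}
    (hz : z ∉ affineSpan 𝕜 (Z : Set V)) (g : V → ℕ) :
    ∑ c ∈ Z - Z, g c + ∑ b ∈ Z, (g (b - z) + g (z - b)) ≤
      ∑ c ∈ insert z Z - insert z Z, g c := by
  have hspan : ∀ b ∈ Z, z - b ∉ vectorSpan 𝕜 (Z : Set V) := fun b hb h ↦ hz <| by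
    simpa using vadd_mem_affineSpan_of_mem_affineSpan_of_mem_vectorSpan
      (mem_affineSpan 𝕜 (mem_coe.2 hb)) h
  have hsub : ∀ b ∈ Z, ∀ b' ∈ Z, b - b' ∈ vectorSpan 𝕜 (Z : Set V) := fun b hb b' hb' ↦
    vsub_mem_vectorSpan 𝕜 (mem_coe.2 hb) (mem_coe.2 hb')
  have hdisj : Disjoint (Z.image (· - z)) (Z.image (z - ·)) := by
    refine disjoint_left.2 fun c hc hc' ↦ ?_
    obtain ⟨b, hb, rfl⟩ := mem_image.1 hc
    obtain ⟨b', hb', h⟩ := mem_image.1 hc'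
    have htwo : (2 : 𝕜) • (z - b') = b - b' := by
      rw [two_smul]
      nth_rw 1 [h]
      abel
    exact hspan b' hb' ((Submodule.smul_mem_iff _ two_ne_zero).1 (htwo ▸ hsub b hb b' hb'))
  have hdisj' : Disjoint (Z - Z) (Z.image (· - z) ∪ Z.image (z - ·)) := by
    refine disjoint_left.2 fun c hc hc' ↦ ?_
    obtain ⟨a, ha, a', ha', rfl⟩ := mem_sub.1 hc
    obtain hc' | hc' := mem_union.1 hc' <;> obtain ⟨b, hb, h⟩ := mem_image.1 hc'
    · exact hspan b hb (by rw [← neg_sub, h, neg_sub]; exact hsub a' ha' a ha)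
    · exact hspan b hb (h ▸ hsub a ha a' ha')
  calc ∑ c ∈ Z - Z, g c + ∑ b ∈ Z, (g (b - z) + g (z - b))
      = ∑ c ∈ (Z - Z) ∪ (Z.image (· - z) ∪ Z.image (z - ·)), g c := by
        rw [sum_union hdisj', sum_union hdisj, sum_image sub_left_injective.injOn,
          sum_image sub_right_injective.injOn, sum_add_distrib]
    _ ≤ ∑ c ∈ insert z Z - insert z Z, g c := by
        refine sum_le_sum_of_subset (union_subset (by gcongr <;> exact subset_insert z Z) <|
          union_subset ?_ ?_) <;> refine image_subset_iff.2 fun b hb ↦ ?_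
        · exact sub_mem_sub (mem_insert_of_mem hb) (mem_insert_self z Z)
        · exact sub_mem_sub (mem_insert_self z Z) (mem_insert_of_mem hb)

variable (𝕜)

lemma sum_sub_self_add_affDim_mul_sum_le {Y Z : Finset V} (hYZ : Y ⊆ Z) {g h : V → ℕ}
    (hgh : ∀ b ∈ Y, ∀ z ∈ Z, h b ≤ g (b - z) ∧ h b ≤ g (z - b)) :
    ∑ c ∈ Y - Y, g c + 2 * affDim 𝕜 Z * ∑ b ∈ Y, h b ≤
      ∑ c ∈ Z - Z, g c + 2 * affDim 𝕜 Y * ∑ b ∈ Y, h b := by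
  obtain ⟨D, rfl⟩ : ∃ D, Z = D ∪ Y := ⟨Z, (union_eq_left.2 hYZ).symm⟩
  clear hYZ
  induction D using Finset.induction_on with
  | empty => rw [empty_union]
  | insert z D _ ih =>
    rw [insert_union] at hgh ⊢
    set Z := D ∪ Y
    have hYZ : Y ⊆ Z := subset_union_right
    have ih := ih fun b hb z' hz' ↦ hgh b hb z' (mem_insert_of_mem hz')
    by_cases hz : z ∈ affineSpan 𝕜 (Z : Set V)
    · have hdim : affDim 𝕜 (insert z Z) = affDim 𝕜 Z := by
        rw [affDim, coe_insert, vectorSpan_insert_eq_vectorSpan hz, affDim]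
      rw [hdim]
      refine ih.trans (Nat.add_le_add_right (sum_le_sum_of_subset ?_) _)
      gcongr <;> exact subset_insert z Z
    · have hdim : affDim 𝕜 (insert z Z) ≤ affDim 𝕜 Z + 1 := by
        rw [affDim, coe_insert]
        exact finrank_vectorSpan_insert_le_set 𝕜 (Z : Set V) z
      have hnew : 2 * ∑ b ∈ Y, h b ≤ ∑ b ∈ Z, (g (b - z) + g (z - b)) := by
        rw [mul_sum]
        refine (sum_le_sum fun b hb ↦ ?_).trans (sum_le_sum_of_subset hYZ)
        have := hgh b hb z (mem_insert_self z Z)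
        omega
      calc ∑ c ∈ Y - Y, g c + 2 * affDim 𝕜 (insert z Z) * ∑ b ∈ Y, h b
          ≤ ∑ c ∈ Y - Y, g c + 2 * (affDim 𝕜 Z + 1) * ∑ b ∈ Y, h b := by gcongr
        _ = (∑ c ∈ Y - Y, g c + 2 * affDim 𝕜 Z * ∑ b ∈ Y, h b) + 2 * ∑ b ∈ Y, h b := by ring
        _ ≤ (∑ c ∈ Z - Z, g c + 2 * affDim 𝕜 Y * ∑ b ∈ Y, h b) +
              ∑ b ∈ Z, (g (b - z) + g (z - b)) := add_le_add ih hnew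
        _ = (∑ c ∈ Z - Z, g c + ∑ b ∈ Z, (g (b - z) + g (z - b))) +
              2 * affDim 𝕜 Y * ∑ b ∈ Y, h b := by ring
        _ ≤ _ := Nat.add_le_add_right (sum_sub_self_add_sum_le_sum_insert hz g) _

lemma card_sub_self_add_affDim_mul_card_le {Y Z : Finset V} (hYZ : Y ⊆ Z) {p : V → Prop}
    [DecidablePred p] (hp : ∀ b ∈ Y, ∀ z ∈ Z, p (b - z) ∧ p (z - b)) :
    #(Y - Y) + 2 * affDim 𝕜 Z * #Y ≤ #{c ∈ Z - Z | p c} + 2 * affDim 𝕜 Y * #Y := by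
  have hY : {c ∈ Y - Y | p c} = Y - Y := filter_true_of_mem fun c hc ↦ by
    obtain ⟨b, hb, b', hb', rfl⟩ := mem_sub.1 hc
    exact (hp b hb b' (hYZ hb')).1
  have := sum_sub_self_add_affDim_mul_sum_le 𝕜 hYZ (g := fun c ↦ if p c then 1 else 0)
    (h := fun _ ↦ 1) fun b hb z hz ↦ by simp [hp b hb z hz]
  rwa [← card_filter, ← card_filter, hY, ← card_eq_sum_ones] at this

theorem affDim_mul_sum_le_sum_sub_self {C : Finset V} {u g : V → ℕ}
    (hC : ∀ X ⊆ C, affDim 𝕜 X * #X ≤ #(X - X))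
    (hug : ∀ b ∈ C, ∀ b' ∈ C, u b + u b' ≤ g (b - b')) :
    2 * affDim 𝕜 C * ∑ b ∈ C, u b ≤ ∑ c ∈ C - C, g c := by
  induction hN : ∑ b ∈ C, u b using Nat.strong_induction_on generalizing C u g with
  | _ N ih =>
  subst hN
  obtain hzero | hpos := Nat.eq_zero_or_pos (∑ b ∈ C, u b)
  · simp [hzero]
  rw [← sum_filter_ne_zero] at hpos ih ⊢
  set C' := {b ∈ C | u b ≠ 0}
  have hC'C : C' ⊆ C := filter_subset _ _
  have hu : ∀ b ∈ C', 1 ≤ u b := fun b hb ↦ Nat.one_le_iff_ne_zero.2 (mem_filter.1 hb).2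
  have hug' : ∀ b ∈ C', ∀ b' ∈ C', u b - 1 + (u b' - 1) ≤ g (b - b') - 2 := by
    intro b hb b' hb'
    have := hug b (hC'C hb) b' (hC'C hb')
    have := hu b hb
    have := hu b' hb'
    omega
  have hg : ∀ c ∈ C' - C', 2 ≤ g c := forall_mem_image₂.2 fun b hb b' hb' ↦
    (add_le_add (hu b hb) (hu b' hb')).trans (hug b (hC'C hb) b' (hC'C hb'))
  have hsum_u := card_mul_add_sum_tsub hu
  have hlevel : 2 * affDim 𝕜 C' * ∑ b ∈ C', u b ≤ ∑ c ∈ C' - C', g c := by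
    have hcard_pos : 0 < #C' := card_pos.2 (nonempty_of_sum_ne_zero hpos.ne')
    calc 2 * affDim 𝕜 C' * ∑ b ∈ C', u b
        = affDim 𝕜 C' * #C' * 2 + 2 * affDim 𝕜 C' * ∑ b ∈ C', (u b - 1) := by
          rw [← hsum_u]; ring
      _ ≤ #(C' - C') * 2 + ∑ c ∈ C' - C', (g c - 2) := by
          gcongr
          · exact hC C' hC'C
          · exact ih _ (by omega) (g := fun c ↦ g c - 2) (fun X hX ↦ hC X (hX.trans hC'C)) hug' rfl
      _ = ∑ c ∈ C' - C', g c := card_mul_add_sum_tsub hg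
  have hlift := sum_sub_self_add_affDim_mul_sum_le 𝕜 hC'C (g := g) (h := u) fun b hb z hz ↦
    ⟨le_of_add_le_left (hug b (hC'C hb) z hz), le_of_add_le_right (hug z hz b (hC'C hb))⟩
  omega

lemma card_sub_self_add_affDim_mul_sum_le {C C' : Finset V} (hC'C : C' ⊆ C) {u g : V → ℕ}
    (hC' : ∀ X ⊆ C', affDim 𝕜 X * #X ≤ #(X - X)) (hu : ∀ b ∈ C', u b ≠ 0)
    (hug : ∀ b ∈ C, ∀ b' ∈ C, u b + u b' ≤ g (b - b')) :
    #(C' - C') + 2 * affDim 𝕜 C * ∑ b ∈ C', (u b - 1) ≤ ∑ c ∈ C - C, (g c - 1) := by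
  have hug' : ∀ b ∈ C', ∀ b' ∈ C', 2 ≤ g (b - b') ∧ u b - 1 + (u b' - 1) ≤ g (b - b') - 1 - 1 := by
    intro b hb b' hb'
    have := hug b (hC'C hb) b' (hC'C hb')
    have := hu b hb
    have := hu b' hb'
    omega
  have hg : ∀ c ∈ C' - C', 1 ≤ g c - 1 := forall_mem_image₂.2 fun b hb b' hb' ↦
    Nat.le_sub_one_of_lt (hug' b hb b' hb').1
  have hlevel := affDim_mul_sum_le_sum_sub_self 𝕜 (u := fun b ↦ u b - 1)
    (g := fun c ↦ g c - 1 - 1) hC' fun b hb b' hb' ↦ (hug' b hb b' hb').2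
  have hlift := sum_sub_self_add_affDim_mul_sum_le 𝕜 hC'C (g := fun c ↦ g c - 1)
    (h := fun b ↦ u b - 1) fun b hb z hz ↦
      ⟨Nat.sub_le_sub_right (le_of_add_le_left (hug b (hC'C hb) z hz)) 1,
        Nat.sub_le_sub_right (le_of_add_le_right (hug z hz b (hC'C hb))) 1⟩
  have hsum_g := card_mul_add_sum_tsub hg
  omega

lemma two_mul_affDim_succ_mul_card_lt {X : Finset V} (hX : X.Nonempty)
    (hdoubling : affDim 𝕜 X * #X < #(X - X)) :
    2 * (affDim 𝕜 X + 1) * #X < 3 * #(X - X) := by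
  have := IsAddTorsionFree.of_isTorsionFree 𝕜 V
  have hcd := card_add_card_le_card_sub_add_one hX hX
  have hdim := affDim_lt_card (𝕜 := 𝕜) hX
  obtain _ | _ := Nat.lt_or_ge (affDim 𝕜 X) 2
  · interval_cases affDim 𝕜 X <;> omega
  · calc 2 * (affDim 𝕜 X + 1) * #X ≤ 3 * affDim 𝕜 X * #X :=
        Nat.mul_le_mul_right _ (by omega)
      _ = 3 * (affDim 𝕜 X * #X) := mul_assoc ..
      _ < 3 * #(X - X) := by gcongr

lemma affDim_succ_mul_lt_card_add_sum {M : Type*} [AddCommGroup M] [LinearOrder M]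
    [IsOrderedAddMonoid M] {C : Finset V} {u g : V → ℕ} {v : V} (hdim : 1 ≤ affDim 𝕜 C)
    (hC : ∀ X ⊆ C, X.Nonempty → affDim 𝕜 X * #X < #(X - X))
    (hug : ∀ b ∈ C, ∀ b' ∈ C, u b + u b' ≤ g (b - b')) (hv : v ∈ C) (huv : u v ≠ 0) (ψ : V →+ M)
    (hψ : ∀ c ∈ C, c ≠ v → ψ c < ψ v) :
    (affDim 𝕜 C + 1) * (#C + ∑ b ∈ C, u b) < #(C - C) + ∑ c ∈ C - C, g c := by
  set C' := {b ∈ C | u b ≠ 0} with hC'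
  have hC'C : C' ⊆ C := filter_subset _ _
  have hv' : v ∈ C' := mem_filter.2 ⟨hv, huv⟩
  have hu : ∀ b ∈ C', u b ≠ 0 := fun b hb ↦ (mem_filter.1 hb).2
  have hg : ∀ b ∈ C', ∀ z ∈ C, g (b - z) ≠ 0 ∧ g (z - b) ≠ 0 := by
    intro b hb z hz
    have := hug b (hC'C hb) z hz
    have := hug z hz b (hC'C hb)
    have := hu b hb
    omega
  have hdoubling : ∀ X ⊆ C', affDim 𝕜 X * #X ≤ #(X - X) := fun X hX ↦ by
    obtain rfl | hne := X.eq_empty_or_nonempty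
    exacts [by simp, (hC X (hX.trans hC'C) hne).le]
  have hvertex := two_mul_card_le_card_filter_sub_add_one hv ψ hψ (p := (g · ≠ 0)) (hg v hv')
  have hsupport := card_sub_self_add_affDim_mul_card_le 𝕜 hC'C (p := (g · ≠ 0)) hg
  have hhigh := card_sub_self_add_affDim_mul_sum_le 𝕜 hC'C hdoubling hu hug
  have hC'_card := two_mul_affDim_succ_mul_card_lt 𝕜 ⟨v, hv'⟩ (hC C' hC'C ⟨v, hv'⟩)
  have hC_card := hC C Subset.rfl ⟨v, hv⟩
  have hsum_g := card_filter_ne_zero_add_sum_tsub_one (C - C) g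
  have hsum_u := card_mul_add_sum_tsub fun b hb ↦ Nat.one_le_iff_ne_zero.2 (hu b hb)
  rw [hC', sum_filter_ne_zero, ← hC'] at hsum_u
  rw [← hsum_g, ← hsum_u]
  set n := affDim 𝕜 C
  set E := ∑ b ∈ C', (u b - 1)
  have : (n + 1) * E ≤ 2 * n * E := by gcongr; omega
  -- The average of `hvertex` and `hsupport` bounds the support of `g`. By `hC'_card`, the copies of
  -- `#(C' - C')` in `hsupport` (one) and in `2 * hhigh` (two) compensate for the smaller dimension
  -- of `C'` in `hsupport`.
  linarith

end Weights

section OrderedField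

variable {𝕜 V : Type*} [Field 𝕜] [LinearOrder 𝕜] [IsStrictOrderedRing 𝕜] [AddCommGroup V]
  [Module 𝕜 V]

variable (𝕜) in
lemma exists_dual_injOn (B : Finset V) : ∃ φ : Dual 𝕜 V, Set.InjOn φ B := by
  classical
  obtain ⟨φ, hφ⟩ := exists_dual_forall_apply_ne_zero (K := 𝕜)
    (fun c : ↥((B - B).erase 0) ↦ (c : V)) fun c ↦ ne_of_mem_erase c.2
  refine ⟨φ, fun a ha b hb hab ↦ ?_⟩
  by_contra hne
  exact hφ ⟨a - b, mem_erase.2 ⟨sub_ne_zero.2 hne, sub_mem_sub ha hb⟩⟩ (by simp [hab])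

-- For a generic `φ`, the point `x` maximizing `φ` is a vertex. Rescaling each `z - x` to `φ`-height
-- `-1` turns the edges at `x` into the vertices of a section of the cone at `x`; a second generic
-- functional `θ` picks out one of them.
lemma exists_edge {B : Finset V} (hB : B.Nontrivial) : ∃ x ∈ B, ∃ y ∈ B, x ≠ y ∧
    ∃ ψ : Dual 𝕜 V, ψ (y - x) = 0 ∧ ∀ z ∈ B, z - x ∉ 𝕜 ∙ (y - x) → ψ z < ψ x := by
  classical
  obtain ⟨φ, hφ⟩ := exists_dual_injOn 𝕜 B
  obtain ⟨x, hx, hx_max⟩ := B.exists_max_image φ hB.nonempty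
  have hheight : ∀ z ∈ B.erase x, 0 < φ x - φ z := fun z hz ↦ by
    obtain ⟨hzx, hz⟩ := mem_erase.1 hz
    exact sub_pos.2 ((hx_max z hz).lt_of_ne fun h ↦ hzx (hφ hz hx h))
  set q : V → V := fun z ↦ (φ x - φ z)⁻¹ • (z - x)
  have hq : ∀ z ∈ B.erase x, z - x = (φ x - φ z) • q z := fun z hz ↦
    (smul_inv_smul₀ (hheight z hz).ne' _).symm
  obtain ⟨θ, hθ⟩ := exists_dual_injOn 𝕜 ((B.erase x).image q)
  obtain ⟨y, hy, hy_max⟩ := (B.erase x).exists_max_image (θ ∘ q) hB.erase_nonempty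
  set ψ : Dual 𝕜 V := θ + θ (q y) • φ
  have hψ : ∀ z ∈ B.erase x, ψ (z - x) = (φ x - φ z) * (θ (q z) - θ (q y)) := fun z hz ↦ by
    have := congrArg θ (hq z hz)
    simp only [map_sub, map_smul, smul_eq_mul] at this
    simp only [ψ, map_sub, LinearMap.add_apply, LinearMap.smul_apply, smul_eq_mul]
    linear_combination this
  refine ⟨x, hx, y, mem_of_mem_erase hy, (ne_of_mem_erase hy).symm, ψ, by simp [hψ y hy],
    fun z hz hzx ↦ ?_⟩
  have hz : z ∈ B.erase x := mem_erase.2 ⟨fun h ↦ hzx (by simp [h]), hz⟩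
  have hlt : θ (q z) < θ (q y) := (hy_max z hz).lt_of_ne fun h ↦ hzx <| by
    have hqzy : q z = q y := hθ (mem_coe.2 (mem_image_of_mem q hz))
      (mem_coe.2 (mem_image_of_mem q hy)) h
    rw [hq z hz, hqzy]
    exact Submodule.smul_mem _ _ (Submodule.smul_mem _ _ (Submodule.mem_span_singleton_self _))
  rw [← sub_neg, ← map_sub, hψ z hz]
  exact mul_neg_of_pos_of_neg (hheight z hz) (sub_neg.2 hlt)

theorem affDim_mul_card_lt_card_sub_self [DecidableEq V] {B : Finset V} (hB : B.Nonempty) :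
    affDim 𝕜 B * #B < #(B - B) := by
  induction hd : affDim 𝕜 B using Nat.strong_induction_on generalizing V with
  | _ d ih =>
  subst hd
  have := IsAddTorsionFree.of_isTorsionFree 𝕜 V
  have hcard := affDim_lt_card (𝕜 := 𝕜) hB
  obtain _ | _ := Nat.lt_or_ge (affDim 𝕜 B) 2
  · have := card_add_card_le_card_sub_add_one hB hB
    interval_cases affDim 𝕜 B <;> omega
  classical
  have hnontrivial : B.Nontrivial := one_lt_card_iff_nontrivial.1 (by omega)
  obtain ⟨x, hx, y, hy, hxy, ψ, hψyx, hψ⟩ := exists_edge (𝕜 := 𝕜) hnontrivial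
  set P := (𝕜 ∙ (y - x)).mkQ
  have hdim : affDim 𝕜 (B.image P) + 1 = affDim 𝕜 B :=
    affDim_image_mkQ_span_singleton_add_one (sub_ne_zero.2 hxy.symm)
      (vsub_mem_vectorSpan 𝕜 (mem_coe.2 hy) (mem_coe.2 hx))
  have hker : 𝕜 ∙ (y - x) ≤ LinearMap.ker ψ := by
    rwa [Submodule.span_singleton_le_iff_mem]
  have hPy : P y = P x := (Submodule.Quotient.eq _).2 (Submodule.mem_span_singleton_self _)
  have hkey := affDim_succ_mul_lt_card_add_sum 𝕜 (C := B.image P) (u := fiberExcess P B)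
    (g := fiberExcess P (B - B)) (v := P x) (by omega)
    (fun X hX hXne ↦ ih _ (by have := affDim_mono (𝕜 := 𝕜) hX; omega) hXne rfl)
    (fun _ hb _ hb' ↦ fiberExcess_add_fiberExcess_le P B hb hb') (mem_image_of_mem P hx)
    (fiberExcess_ne_zero hx hy hxy hPy) ((𝕜 ∙ (y - x)).liftQ ψ hker).toAddMonoidHom (by
      simp only [forall_mem_image]
      exact fun z hz hzx ↦ hψ z hz fun h ↦ hzx ((Submodule.Quotient.eq _).2 h))
  rwa [card_image_add_sum_fiberExcess, ← image_sub_eq_image_sub_image,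
    card_image_add_sum_fiberExcess, hdim] at hkey

theorem affDim_sub_one_mul_card_le [DecidableEq V] (v : V) [DecidableEq (V ⧸ 𝕜 ∙ v)]
    (A : Finset V) : 2 * (affDim 𝕜 A - 1) * #A ≤
      #(A - A) + 2 * (affDim 𝕜 A - 1) * #(A.image (𝕜 ∙ v).mkQ) := by
  have := IsAddTorsionFree.of_isTorsionFree 𝕜 V
  set P := (𝕜 ∙ v).mkQ
  have hdim : affDim 𝕜 A - 1 ≤ affDim 𝕜 (A.image P) :=
    Nat.sub_le_of_le_add (affDim_le_affDim_image_mkQ_span_singleton_add_one v A)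
  have hfibers := affDim_mul_sum_le_sum_sub_self 𝕜 (C := A.image P) (u := fiberExcess P A)
    (g := fiberExcess P (A - A)) (fun X _ ↦ by
      obtain rfl | hX := X.eq_empty_or_nonempty
      exacts [by simp, (affDim_mul_card_lt_card_sub_self hX).le])
    (fun _ hb _ hb' ↦ fiberExcess_add_fiberExcess_le P A hb hb')
  have hAA := card_image_add_sum_fiberExcess P (A - A)
  rw [image_sub_eq_image_sub_image] at hAA
  calc 2 * (affDim 𝕜 A - 1) * #A
      = 2 * (affDim 𝕜 A - 1) * ∑ b ∈ A.image P, fiberExcess P A b +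
          2 * (affDim 𝕜 A - 1) * #(A.image P) := by
        rw [← mul_add, add_comm, card_image_add_sum_fiberExcess]
    _ ≤ #(A - A) + 2 * (affDim 𝕜 A - 1) * #(A.image P) := by
        gcongr
        exact (Nat.mul_le_mul_right _ (by gcongr)).trans (hfibers.trans (by omega))

theorem stmt_4_general [DecidableEq V] {ι : Type*} [Fintype ι] (v : V) (p : ι → V) {A : Finset V}
    (hdim : 1 ≤ affDim 𝕜 A) (hcover : (A : Set V) ⊆ ⋃ i, {x | ∃ t : 𝕜, x = p i + t • v}) :
    (2 * affDim 𝕜 A - 2 : ℤ) * #A - (2 * affDim 𝕜 A - 2) * Fintype.card ι ≤ #(A - A) := by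
  classical
  have himage : A.image (𝕜 ∙ v).mkQ ⊆ univ.image ((𝕜 ∙ v).mkQ ∘ p) := by
    refine image_subset_iff.2 fun a ha ↦ ?_
    obtain ⟨i, t, rfl⟩ := Set.mem_iUnion.1 (hcover ha)
    exact mem_image.2 ⟨i, mem_univ i, (Submodule.Quotient.eq _).2 <| by
      simpa using Submodule.smul_mem _ t (Submodule.mem_span_singleton_self v)⟩
  have hlines : #(A.image (𝕜 ∙ v).mkQ) ≤ Fintype.card ι :=
    (card_le_card himage).trans card_image_le
  have hmain := (affDim_sub_one_mul_card_le v A).trans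
    (Nat.add_le_add_left (Nat.mul_le_mul_left _ hlines) _)
  zify [hdim] at hmain
  linarith

end OrderedField

theorem stmt_4 {d r : ℕ} (hd : 1 ≤ d) (v : Fin d → ℝ) (hv : v ≠ 0)
    (p : Fin r → (Fin d → ℝ))
    (l : Fin r → Set (Fin d → ℝ))
    (hl : ∀ i, l i = {x | ∃ t : ℝ, x = p i + t • v})
    (A : Finset (Fin d → ℝ)) (hA : A.Nonempty)
    (hdim : Module.finrank ℝ (affineSpan ℝ (A : Set (Fin d → ℝ))).direction = d)
    (hcover : (A : Set (Fin d → ℝ)) ⊆ ⋃ i, l i)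
    (hbig : ∀ i, 2 * d ^ 2 ≤ ((A : Set (Fin d → ℝ)) ∩ l i).ncard) :
    ((A - A).card : ℤ) ≥ (2 * d - 2 : ℤ) * A.card - 1000 * d ^ 3 * r := by
  rw [direction_affineSpan, ← affDim] at hdim
  have hmain := stmt_4_general v p (hdim.symm ▸ hd) (by simpa only [hl] using hcover)
  rw [hdim, Fintype.card_fin] at hmain
  have hconst : (2 * d - 2 : ℤ) ≤ 1000 * d ^ 3 := by
    have : (d : ℤ) ≤ d ^ 3 := by exact_mod_cast Nat.le_self_pow three_ne_zero d
    linarith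
  exact (sub_le_sub_left (mul_le_mul_of_nonneg_right hconst r.cast_nonneg) _).trans hmain
end

section
/- Let d ≥ 3 be a natural number and A ⊆ ℝ^d a finite nonempty set with dim(A) = d. Then there exists δ > 0 and a constant C_d > 0, both depending only on d, such that |A-A| ≥ (2d-2)|A| - C_d·|A|^{1-δ}. -/
open Finset Pointwise

/-!
Suppose `#(A - A) < 2 * (d - 1) * #A`. Plünnecke–Ruzsa and Ruzsa's covering lemma give a set `X` of
bounded size with `(A - A) + (A - A) ⊆ X + (A - A)`. Doubling a point of `A - A` therefore stays in
`A - A` up to a shift from `X`, and the pigeonhole principle on the first `m ≈ log #A` shifts yields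
`e ≠ 0` for which every `2 ^ i • e` with `i ≤ m` is a difference of two elements of `A - A`. The
sumset of `2 * m + 1` copies of `A - A`, larger than `A` by a factor polynomial in `m`, contains
`A - A` with a progression of length `2 ^ m` in direction `e` added to it. So `A - A` meets at most
`C * #A ^ (1 - δ)` lines parallel to `e`.

Project along `e`, with `π A` weighted by the sizes of its fibres. By Cauchy–Davenport applied to
pairs of fibres, `#(A - A)` is at least the weighted size of `π A - π A`, up to the number of lines
just bounded. The weighted size is at least `2 * (d - 1) * #A`, by induction on the weight: remove
one layer from the support `B` of the weight. For differences in the linear span of `B - B` this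
uses `#(B - B) ≥ dim B * #B`. For the others, project along that span: `B` becomes a point, and
each of the at least `2 * dim` nonzero differences between this point and the rest carries at least
the whole weight of `B`.

The inequality `#(A - A) ≥ dim A * #A + 1` is obtained by the same method, with `e` replaced by a
difference with two representations. If there is none, then `#(A - A) = #A * (#A - 1) + 1`.
-/

lemma sum_sub_one_add_card {ι : Type*} {s : Finset ι} {w : ι → ℕ} (hw : ∀ i ∈ s, 1 ≤ w i) :
    ∑ i ∈ s, (w i - 1) + #s = ∑ i ∈ s, w i := by
  rw [card_eq_sum_ones, ← sum_add_distrib]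
  exact sum_congr rfl fun i hi => Nat.sub_add_cancel (hw i hi)

/-! ### Weighted difference sets -/

section NonzeroDiffs

variable {Q : Type*} [AddCommGroup Q] [DecidableEq Q]

/-- The nonzero elements of `({c} - Y) ∪ (Y - {c})`, i.e. the nonzero differences of `insert c Y`
in whose representations `c` takes part. -/
def nonzeroDiffs (Y : Finset Q) (c : Q) : Finset Q := (({c} - Y) ∪ (Y - {c})).erase 0

lemma mem_nonzeroDiffs {Y : Finset Q} {c z : Q} :
    z ∈ nonzeroDiffs Y c ↔ z ≠ 0 ∧ (c - z ∈ Y ∨ c + z ∈ Y) := by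
  simp only [nonzeroDiffs, mem_erase, mem_union, mem_sub, mem_singleton, exists_eq_left,
    sub_eq_iff_eq_add]
  simp [eq_comm, ← sub_eq_iff_eq_add', add_comm]

end NonzeroDiffs

section WeightedDifferences

variable {V Q : Type*} [AddCommGroup V] [DecidableEq V] [AddCommGroup Q] [DecidableEq Q]

/-- The largest value of `w x + w y` over the representations `v = x - y` of `v` as a difference of
two points of `X`; it is `0` when there is no such representation. -/
def maxPairWeight (X : Finset V) (w : V → ℕ) (v : V) : ℕ :=
  {p ∈ X ×ˢ X | p.1 - p.2 = v}.sup fun p => w p.1 + w p.2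

/-- The size of the difference set of `X` when each difference is counted with the largest total
weight of a pair representing it. If `w x` is the size of the fibre of `A` over `x`, this is about
the lower bound for `#(A - A)` obtained by applying Cauchy–Davenport to pairs of fibres. -/
def weightedCardSub (X : Finset V) (w : V → ℕ) : ℕ := ∑ v ∈ X - X, maxPairWeight X w v

variable {S X B : Finset V} {u w : V → ℕ}

lemma add_le_maxPairWeight {x y v : V} (hx : x ∈ X) (hy : y ∈ X) (hv : x - y = v) :
    w x + w y ≤ maxPairWeight X w v :=
  le_sup (f := fun p : V × V => w p.1 + w p.2) (b := (x, y)) (by simp [hx, hy, hv])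

lemma exists_maxPairWeight_eq {v : V} (hv : v ∈ X - X) :
    ∃ x ∈ X, ∃ y ∈ X, x - y = v ∧ maxPairWeight X w v = w x + w y := by
  obtain ⟨x, hx, y, hy, rfl⟩ := mem_sub.1 hv
  have hne : {p ∈ X ×ˢ X | p.1 - p.2 = x - y}.Nonempty := ⟨(x, y), by simp [hx, hy]⟩
  obtain ⟨p, hp, hmax⟩ := exists_mem_eq_sup _ hne (fun p : V × V => w p.1 + w p.2)
  simp only [mem_filter, mem_product] at hp
  exact ⟨p.1, hp.1.1, p.2, hp.1.2, hp.2, hmax⟩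

lemma sum_le_weightedCardSub (hX : X.Nonempty) : ∑ x ∈ X, w x ≤ weightedCardSub X w := by
  obtain ⟨a, ha⟩ := hX
  calc ∑ x ∈ X, w x ≤ ∑ x ∈ X, maxPairWeight X w (x - a) :=
        sum_le_sum fun x hx => le_self_add.trans (add_le_maxPairWeight hx ha rfl)
    _ = ∑ v ∈ X.image (· - a), maxPairWeight X w v :=
        (sum_image (sub_left_injective.injOn)).symm
    _ ≤ weightedCardSub X w :=
        sum_le_sum_of_subset (image_subset_iff.2 fun x hx => sub_mem_sub hx ha)

lemma card_add_card_add_weightedCardSub_le (hBS : B ⊆ S) (hSX : S ⊆ X) (hw : ∀ b ∈ B, 1 ≤ w b) :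
    #(S - B) + #(B - B) + weightedCardSub B (fun b => w b - 1) ≤
      ∑ v ∈ S - B, maxPairWeight X w v := by
  have hBB : B - B ⊆ S - B := sub_subset_sub_right hBS
  have hB : #(B - B) + weightedCardSub B (fun b => w b - 1) =
      ∑ v ∈ S - B, if v ∈ B - B then 1 + maxPairWeight B (fun b => w b - 1) v else 0 := by
    rw [sum_ite_mem, inter_eq_right.2 hBB, sum_add_distrib, ← card_eq_sum_ones, weightedCardSub]
  rw [add_assoc, hB, card_eq_sum_ones, ← sum_add_distrib]
  refine sum_le_sum fun v hv => ?_
  split_ifs with hvB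
  · obtain ⟨x, hx, y, hy, hxy, hmax⟩ := exists_maxPairWeight_eq (w := fun b => w b - 1) hvB
    have := add_le_maxPairWeight (w := w) (hSX (hBS hx)) (hSX (hBS hy)) hxy
    have := hw x hx
    have := hw y hy
    omega
  · obtain ⟨x, hx, y, hy, hxy⟩ := mem_sub.1 hv
    have := add_le_maxPairWeight (w := w) (hSX hx) (hSX (hBS hy)) hxy
    have := hw y hy
    omega

lemma card_add_card_add_weightedCardSub_le_sum_fiber_zero {F : Type*} [FunLike F V Q]
    [AddMonoidHomClass F V Q] {π : F} {c : Q} (hBS : B ⊆ S) (hSX : S ⊆ X)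
    (hw : ∀ b ∈ B, 1 ≤ w b) (hc : ∀ x ∈ S, π x = c) :
    #(S - B) + #(B - B) + weightedCardSub B (fun b => w b - 1) ≤
      ∑ v ∈ X - X with π v = 0, maxPairWeight X w v := by
  refine (card_add_card_add_weightedCardSub_le hBS hSX hw).trans (sum_le_sum_of_subset ?_)
  intro v hv
  obtain ⟨x, hx, b, hb, rfl⟩ := mem_sub.1 hv
  exact mem_filter.2 ⟨sub_mem_sub (hSX hx) (hSX (hBS hb)),
    by rw [map_sub, hc x hx, hc b (hBS hb), sub_self]⟩

lemma maxPairWeight_neg (v : V) : maxPairWeight X w (-v) = maxPairWeight X w v := by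
  have key : ∀ v, maxPairWeight X w (-v) ≤ maxPairWeight X w v := fun v =>
    Finset.sup_le fun p hp => by
      simp only [mem_filter, mem_product] at hp
      rw [add_comm]
      exact add_le_maxPairWeight hp.1.2 hp.1.1 (by rw [← neg_sub, hp.2, neg_neg])
  exact (key v).antisymm (by simpa using key (-v))

lemma sum_maxPairWeight_fiber_neg {F : Type*} [FunLike F V Q] [AddMonoidHomClass F V Q] (π : F)
    (y : Q) :
    ∑ v ∈ X - X with π v = -y, maxPairWeight X w v =
      ∑ v ∈ X - X with π v = y, maxPairWeight X w v := by
  refine sum_equiv (Equiv.neg V) (fun v => ?_) fun v _ => (maxPairWeight_neg v).symm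
  rw [mem_filter, mem_filter, Equiv.neg_apply, map_neg, ← mem_neg', neg_sub, neg_eq_iff_eq_neg]

lemma image_sub_eq {F : Type*} [FunLike F V Q] [AddMonoidHomClass F V Q] (π : F) (A : Finset V) :
    (A - A).image π = A.image π - A.image π :=
  image_image₂_distrib (map_sub π)

lemma sum_fiber_nonzeroDiffs_le (π : V → Q) (Y : Finset Q) (c : Q) :
    ∑ z ∈ nonzeroDiffs Y c, ∑ v ∈ X - X with π v = z, maxPairWeight X w v ≤
      ∑ v ∈ X - X with π v ≠ 0, maxPairWeight X w v := by
  rw [sum_fiberwise_eq_sum_filter]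
  exact sum_le_sum_of_subset
    (monotone_filter_right _ fun v _ hv => (mem_nonzeroDiffs.1 hv).1)

section TorsionFree

variable [IsAddTorsionFree V]

lemma card_add_card_le_card_sub_add_one_s5 {T : Finset V} (hS : S.Nonempty) (hT : T.Nonempty) :
    #S + #T ≤ #(S - T) + 1 := by
  have hcd := cauchy_davenport_of_isAddTorsionFree hS hT.neg
  rw [← sub_eq_add_neg, card_neg] at hcd
  omega

/-- Cauchy–Davenport in `V × ℤ`, for `S × {0}` and the region of height `u` over `B`. -/
lemma sum_add_card_le_sum_sub_add_one (hS : S.Nonempty) (hu : 0 < ∑ b ∈ B, u b) {m : V → ℕ}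
    (hm : ∀ b ∈ B, ∀ x ∈ S, u b ≤ m (b - x)) :
    ∑ b ∈ B, u b + #S ≤ ∑ v ∈ B - S, m v + 1 := by
  let region (T : Finset V) (h : V → ℕ) : Finset (V × ℤ) :=
    (T.sigma fun v => range (h v)).image fun p => (p.1, (p.2 : ℤ))
  have card_region (T : Finset V) (h : V → ℕ) : #(region T h) = ∑ v ∈ T, h v := by
    rw [card_image_of_injective, card_sigma]
    · simp only [card_range]
    · rintro ⟨v, i⟩ ⟨v', i'⟩ h
      simp_all
  have hsub : region B u - S ×ˢ {0} ⊆ region (B - S) m := by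
    intro z hz
    obtain ⟨p, hp, q, hq, rfl⟩ := mem_sub.1 hz
    obtain ⟨⟨b, i⟩, hbi, rfl⟩ := mem_image.1 hp
    obtain ⟨hx, hq0⟩ : q.1 ∈ S ∧ q.2 = 0 := by rwa [mem_product, mem_singleton] at hq
    obtain ⟨hb, hi⟩ : b ∈ B ∧ i < u b := by simpa using hbi
    exact mem_image.2 ⟨⟨b - q.1, i⟩, by simp [sub_mem_sub hb hx, hi.trans_le (hm b hb _ hx)],
      Prod.ext rfl (by simp [hq0])⟩
  have hregion : (region B u).Nonempty := by rwa [← card_pos, card_region]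
  calc ∑ b ∈ B, u b + #S = #(region B u) + #(S ×ˢ {(0 : ℤ)}) := by simp [card_region]
    _ ≤ #(region B u - S ×ˢ {(0 : ℤ)}) + 1 :=
        card_add_card_le_card_sub_add_one_s5 hregion (hS.product (singleton_nonempty 0))
    _ ≤ #(region (B - S) m) + 1 := by gcongr
    _ = ∑ v ∈ B - S, m v + 1 := by rw [card_region]

lemma weightedCardSub_card_fiber_le {F : Type*} [FunLike F V Q] [AddMonoidHomClass F V Q] (π : F)
    (A : Finset V) :
    weightedCardSub (A.image π) (fun x => #{a ∈ A | π a = x}) ≤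
      #(A - A) + #(A.image π - A.image π) := by
  rw [card_eq_sum_card_image π (A - A), image_sub_eq, card_eq_sum_ones (_ - _), ← sum_add_distrib]
  refine sum_le_sum fun v hv => ?_
  obtain ⟨x, hx, y, hy, rfl, hmax⟩ :=
    exists_maxPairWeight_eq (w := fun x => #{a ∈ A | π a = x}) hv
  have fiber_sub_fiber : {a ∈ A | π a = x} - {a ∈ A | π a = y} ⊆ {v ∈ A - A | π v = x - y} := by
    intro z hz
    obtain ⟨a, ha, b, hb, rfl⟩ := mem_sub.1 hz
    simp only [mem_filter] at ha hb ⊢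
    exact ⟨sub_mem_sub ha.1 hb.1, by rw [map_sub, ha.2, hb.2]⟩
  rw [hmax]
  exact (card_add_card_le_card_sub_add_one_s5 (fiber_nonempty_iff_mem_image.2 hx)
    (fiber_nonempty_iff_mem_image.2 hy)).trans (by gcongr)

section Fibers

variable {F : Type*} [FunLike F V Q] [AddMonoidHomClass F V Q] {π : F} {c : Q}

lemma sum_add_card_fiber_le (hBX : B ⊆ X) (hw : 0 < ∑ b ∈ B, w b) (hc : ∀ b ∈ B, π b = c) {y : Q}
    (hy : y ∈ X.image π) :
    ∑ b ∈ B, w b + #{x ∈ X | π x = y} ≤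
      ∑ v ∈ X - X with π v = c - y, maxPairWeight X w v + 1 := by
  have hsub : B - {x ∈ X | π x = y} ⊆ {v ∈ X - X | π v = c - y} := by
    intro v hv
    obtain ⟨b, hb, x, hx, rfl⟩ := mem_sub.1 hv
    rw [mem_filter] at hx ⊢
    exact ⟨sub_mem_sub (hBX hb) hx.1, by rw [map_sub, hc b hb, hx.2]⟩
  refine (sum_add_card_le_sum_sub_add_one (fiber_nonempty_iff_mem_image.2 hy) hw fun b hb x hx =>
    ?_).trans (Nat.add_le_add_right (sum_le_sum_of_subset hsub) 1)
  exact le_self_add.trans (add_le_maxPairWeight (hBX hb) (mem_filter.1 hx).1 rfl)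

lemma sum_add_card_fiber_le_and_sum_le (hBX : B ⊆ X) (hw : 0 < ∑ b ∈ B, w b)
    (hc : ∀ b ∈ B, π b = c) {z : Q} (hz : z ∈ nonzeroDiffs (X.image π) c) :
    ∑ b ∈ B, w b + #{x ∈ X | π x = c - z} ≤
        ∑ v ∈ X - X with π v = z, maxPairWeight X w v + 1 ∧
      ∑ b ∈ B, w b ≤ ∑ v ∈ X - X with π v = z, maxPairWeight X w v := by
  have fiber_pos {y : Q} (hy : y ∈ X.image π) : 0 < #{x ∈ X | π x = y} :=
    card_pos.2 (fiber_nonempty_iff_mem_image.2 hy)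
  by_cases hsub : c - z ∈ X.image π
  · have key := sum_add_card_fiber_le hBX hw hc hsub
    rw [sub_sub_cancel] at key
    have := fiber_pos hsub
    omega
  · have hadd := (mem_nonzeroDiffs.1 hz).2.resolve_left hsub
    have key := sum_add_card_fiber_le hBX hw hc hadd
    rw [sub_add_cancel_left, sum_maxPairWeight_fiber_neg] at key
    have hempty : #{x ∈ X | π x = c - z} = 0 := by
      rwa [card_eq_zero, ← not_nonempty_iff_eq_empty, fiber_nonempty_iff_mem_image]
    have := fiber_pos hadd
    omega

lemma card_nonzeroDiffs_mul_sum_le (hBX : B ⊆ X) (hw : 0 < ∑ b ∈ B, w b)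
    (hc : ∀ b ∈ B, π b = c) :
    #(nonzeroDiffs (X.image π) c) * ∑ b ∈ B, w b ≤
      ∑ v ∈ X - X with π v ≠ 0, maxPairWeight X w v := by
  rw [← smul_eq_mul]
  exact (card_nsmul_le_sum _ _ _ fun z hz =>
    (sum_add_card_fiber_le_and_sum_le hBX hw hc hz).2).trans (sum_fiber_nonzeroDiffs_le π _ c)

lemma card_filter_ne_add_card_nonzeroDiffs_mul_sum_le (hBX : B ⊆ X) (hw : 0 < ∑ b ∈ B, w b)
    (hc : ∀ b ∈ B, π b = c) :
    #{x ∈ X | π x ≠ c} + #(nonzeroDiffs (X.image π) c) * ∑ b ∈ B, w b ≤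
      ∑ v ∈ X - X with π v ≠ 0, maxPairWeight X w v + #(nonzeroDiffs (X.image π) c) := by
  set Z := nonzeroDiffs (X.image π) c
  have card_le : #{x ∈ X | π x ≠ c} ≤ ∑ z ∈ Z, #{x ∈ X | π x = c - z} := by
    refine (card_eq_sum_card_fiberwise (f := fun x => c - π x) (t := Z) ?_).trans_le
      (sum_le_sum fun z _ => card_le_card ?_)
    · intro x hx
      have hx := mem_filter.1 hx
      exact mem_nonzeroDiffs.2 ⟨sub_ne_zero.2 hx.2.symm,
        .inl (by simpa using mem_image_of_mem π hx.1)⟩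
    · intro x hx
      simp only [mem_filter] at hx ⊢
      exact ⟨hx.1.1, by rw [← hx.2, sub_sub_cancel]⟩
  calc #{x ∈ X | π x ≠ c} + #Z * ∑ b ∈ B, w b
      ≤ ∑ z ∈ Z, (∑ b ∈ B, w b + #{x ∈ X | π x = c - z}) := by
        rw [sum_add_distrib, sum_const, smul_eq_mul, add_comm]
        gcongr
    _ ≤ ∑ z ∈ Z, (∑ v ∈ X - X with π v = z, maxPairWeight X w v + 1) :=
        sum_le_sum fun z hz => (sum_add_card_fiber_le_and_sum_le hBX hw hc hz).1
    _ ≤ ∑ v ∈ X - X with π v ≠ 0, maxPairWeight X w v + #Z := by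
        rw [sum_add_distrib, ← card_eq_sum_ones]
        gcongr
        exact sum_fiber_nonzeroDiffs_le π _ c

end Fibers

end TorsionFree

end WeightedDifferences

/-! ### Difference sets and dimension -/

section Translates

variable {V Q : Type*} [AddCommGroup V] [DecidableEq V] [AddCommGroup Q] [DecidableEq Q]

lemma card_image_add_card_inter_vadd_le [IsAddTorsionFree V] {F : Type*} [FunLike F V Q]
    [AddMonoidHomClass F V Q] {π : F} {v : V} (hv : v ≠ 0) (hπ : π v = 0) (A : Finset V) :
    #(A.image π) + #(A ∩ (v +ᵥ A)) ≤ #A := by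
  have hsub : A.image π ⊆ (A \ (v +ᵥ A)).image π := by
    intro x hx
    obtain ⟨a, ha, rfl⟩ := mem_image.1 hx
    by_contra hcon
    have hmem (n : ℕ) : a - n • v ∈ A := by
      induction n with
      | zero => simpa using ha
      | succ n ih =>
        have hn : a - n • v ∈ v +ᵥ A := by
          by_contra hn
          exact hcon (mem_image.2 ⟨_, mem_sdiff.2 ⟨ih, hn⟩, by simp [hπ]⟩)
        obtain ⟨b, hb, hbn⟩ := mem_vadd_finset.1 hn
        rwa [succ_nsmul, ← sub_sub, ← hbn, vadd_eq_add, add_sub_cancel_left]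
    exact Set.infinite_of_injective_forall_mem
      (sub_right_injective.comp (injective_nsmul_iff_not_isOfFinAddOrder.2
        (not_isOfFinAddOrder_of_isAddTorsionFree hv))) hmem A.finite_toSet
  calc #(A.image π) + #(A ∩ (v +ᵥ A)) ≤ #(A \ (v +ᵥ A)) + #(A ∩ (v +ᵥ A)) :=
        Nat.add_le_add_right ((card_le_card hsub).trans card_image_le) _
    _ = #A := card_sdiff_add_card_inter A _

lemma card_mul_card_add_one_le_of_card_inter_vadd_le_one {A : Finset V} (hA : A.Nonempty)
    (h : ∀ v : V, v ≠ 0 → #(A ∩ (v +ᵥ A)) ≤ 1) : #A * #A + 1 ≤ #(A - A) + #A := by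
  have h0 : 0 ∈ A - A := hA.zero_mem_sub
  have hsum : #A * #A = ∑ v ∈ A - A, #(A ∩ (v +ᵥ A)) := by
    simp_rw [card_inter_vadd, addConvolution]
    rw [sub_eq_add_neg]
    nth_rw 2 [← card_neg A]
    rw [← card_product]
    exact card_eq_sum_card_fiberwise fun p hp =>
      add_mem_add (mem_product.1 hp).1 (mem_product.1 hp).2
  calc #A * #A + 1
      = ∑ v ∈ (A - A).erase 0, #(A ∩ (v +ᵥ A)) + #A + 1 := by
        rw [hsum, ← sum_erase_add _ _ h0, zero_vadd, inter_self]
    _ ≤ #((A - A).erase 0) + #A + 1 := by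
        gcongr
        simpa using sum_le_card_nsmul _ _ 1 fun v hv => h v (ne_of_mem_erase hv)
    _ = #(A - A) + #A := by rw [← card_erase_add_one h0]; ring

end Translates

section AffineDim

variable (𝕜 : Type*) {V : Type*} [DivisionRing 𝕜] [AddCommGroup V] [Module 𝕜 V]

/-- The dimension of the affine span of a finite set, with value `0` for the empty set. -/
noncomputable def affineDim (X : Finset V) : ℕ := Module.finrank 𝕜 (vectorSpan 𝕜 (X : Set V))

lemma affineDim_add_one_le_card {A : Finset V} (hA : A.Nonempty) : affineDim 𝕜 A + 1 ≤ #A := by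
  classical
  obtain ⟨n, hn⟩ := Nat.exists_eq_add_one.2 hA.card_pos
  have := finrank_vectorSpan_image_finset_le 𝕜 id A hn
  rw [image_id] at this
  exact hn ▸ Nat.add_le_add_right this 1

lemma affineDim_image_mkQ_add_finrank {X : Finset V} {W : Submodule 𝕜 V}
    [DecidableEq (V ⧸ W)] (hW : W ≤ vectorSpan 𝕜 (X : Set V)) :
    affineDim 𝕜 (X.image W.mkQ) + Module.finrank 𝕜 W = affineDim 𝕜 X := by
  have := finiteDimensional_vectorSpan_of_finite 𝕜 X.finite_toSet
  have hspan : (vectorSpan 𝕜 (X : Set V)).map W.mkQ =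
      vectorSpan 𝕜 (X.image W.mkQ : Set (V ⧸ W)) := by
    simpa using AffineMap.map_vectorSpan W.mkQ.toAffineMap (s := (X : Set V))
  have hrank := LinearMap.finrank_range_add_finrank_ker
    (W.mkQ.domRestrict (vectorSpan 𝕜 (X : Set V)))
  rw [LinearMap.range_domRestrict, LinearMap.ker_domRestrict, Submodule.ker_mkQ, hspan,
    (Submodule.comapSubtypeEquivOfLe hW).finrank_eq] at hrank
  exact hrank

lemma mkQ_vectorSpan_eq {B : Finset V} {x y : V} (hx : x ∈ B) (hy : y ∈ B) :
    (vectorSpan 𝕜 (B : Set V)).mkQ x = (vectorSpan 𝕜 (B : Set V)).mkQ y :=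
  (Submodule.Quotient.eq _).2 (vsub_mem_vectorSpan 𝕜 (mem_coe.2 hx) (mem_coe.2 hy))

lemma affineDim_mono {B X : Finset V} (hBX : B ⊆ X) : affineDim 𝕜 B ≤ affineDim 𝕜 X :=
  have := finiteDimensional_vectorSpan_of_finite 𝕜 X.finite_toSet
  Submodule.finrank_mono (vectorSpan_mono 𝕜 (coe_subset.2 hBX))

lemma affineDim_image_mkQ_vectorSpan_add {B X : Finset V}
    [DecidableEq (V ⧸ vectorSpan 𝕜 (B : Set V))] (hBX : B ⊆ X) :
    affineDim 𝕜 (X.image (vectorSpan 𝕜 (B : Set V)).mkQ) + affineDim 𝕜 B = affineDim 𝕜 X :=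
  affineDim_image_mkQ_add_finrank 𝕜 (vectorSpan_mono 𝕜 (coe_subset.2 hBX))

lemma affineDim_image_mkQ_span_singleton_add_one {X : Finset V} {e : V}
    [DecidableEq (V ⧸ Submodule.span 𝕜 {e})] (he : e ≠ 0) (heX : e ∈ vectorSpan 𝕜 (X : Set V)) :
    affineDim 𝕜 (X.image (Submodule.span 𝕜 {e}).mkQ) + 1 = affineDim 𝕜 X := by
  rw [← affineDim_image_mkQ_add_finrank 𝕜 ((Submodule.span_singleton_le_iff_mem _ _).2 heX),
    finrank_span_singleton he]

lemma mem_vectorSpan_of_inter_vadd_nonempty [DecidableEq V] {A : Finset V} {v : V}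
    (h : (A ∩ (v +ᵥ A)).Nonempty) : v ∈ vectorSpan 𝕜 (A : Set V) := by
  obtain ⟨a, ha⟩ := h
  obtain ⟨haA, b, hb, rfl⟩ := by simpa only [mem_inter, mem_vadd_finset] using ha
  simpa using vsub_mem_vectorSpan 𝕜 (mem_coe.2 haA) (mem_coe.2 hb)

variable [CharZero 𝕜] [DecidableEq V]

lemma two_mul_finrank_span_le (Y : Finset V) :
    2 * Module.finrank 𝕜 (Submodule.span 𝕜 (Y : Set V)) ≤ #((Y ∪ -Y).erase 0) := by
  have := IsAddTorsionFree.of_isTorsionFree 𝕜 V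
  obtain ⟨T, hTY, hspan, hT⟩ := exists_linearIndependent 𝕜 (Y : Set V)
  lift T to Finset V using Y.finite_toSet.subset hTY
  rw [← hspan, finrank_span_finset_eq_card hT]
  have hT0 : 0 ∉ T := fun h => hT.ne_zero ⟨0, h⟩ rfl
  have hdisj : Disjoint T (-T) := by
    refine disjoint_left.2 fun t ht ht' => ?_
    have hne : t ≠ 0 := ne_of_mem_of_not_mem ht hT0
    have hself := congrArg Subtype.val (hT.eq_of_smul_apply_eq_smul_apply (i := ⟨t, ht⟩)
      (j := ⟨-t, mem_neg'.1 ht'⟩) 1 (-1) one_ne_zero (by simp))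
    exact hne (self_eq_neg.1 hself)
  calc 2 * #T = #(T ∪ -T) := by rw [card_union_of_disjoint hdisj, card_neg, two_mul]
    _ ≤ #((Y ∪ -Y).erase 0) := by
      refine card_le_card (subset_erase.2 ⟨?_, ?_⟩)
      · gcongr <;> exact mod_cast hTY
      · simpa using hT0

lemma two_mul_affineDim_le_card_nonzeroDiffs {Y : Finset V} {c : V} (hc : c ∈ Y) :
    2 * affineDim 𝕜 Y ≤ #(nonzeroDiffs Y c) := by
  have h := two_mul_finrank_span_le 𝕜 ({c} - Y)
  rw [neg_sub, coe_sub, coe_singleton] at h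
  rwa [affineDim, vectorSpan_eq_span_vsub_set_left 𝕜 (mem_coe.2 hc), ← Set.singleton_vsub]

theorem two_mul_affineDim_mul_sum_le_weightedCardSub {X : Finset V} (w : V → ℕ)
    (h : ∀ B ⊆ X, B.Nonempty → affineDim 𝕜 B * #B ≤ #(B - B)) :
    2 * affineDim 𝕜 X * ∑ x ∈ X, w x ≤ weightedCardSub X w := by
  classical
  have := IsAddTorsionFree.of_isTorsionFree 𝕜 V
  induction hs : ∑ x ∈ X, w x using Nat.strong_induction_on generalizing X w with
  | _ s ih =>
  obtain rfl | hspos := s.eq_zero_or_pos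
  · simp
  set B := {x ∈ X | w x ≠ 0}
  have hBX : B ⊆ X := filter_subset _ _
  have hwB : ∀ b ∈ B, 1 ≤ w b := fun b hb => Nat.one_le_iff_ne_zero.2 (mem_filter.1 hb).2
  have hsB : ∑ b ∈ B, w b = s := (sum_filter_ne_zero X).trans hs
  have hsum : ∑ b ∈ B, (w b - 1) + #B = s := (sum_sub_one_add_card hwB).trans hsB
  obtain ⟨b, hb⟩ : B.Nonempty := nonempty_of_sum_ne_zero (hsB.trans_ne hspos.ne')
  set π := (vectorSpan 𝕜 (B : Set V)).mkQ
  have hπB : ∀ x ∈ B, π x = π b := fun x hx => mkQ_vectorSpan_eq 𝕜 hx hb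
  have inner_bound : 2 * affineDim 𝕜 B * s ≤ ∑ v ∈ X - X with π v = 0, maxPairWeight X w v := by
    have hB := h B hBX ⟨b, hb⟩
    have hrec := ih _ (by have := card_pos.2 ⟨b, hb⟩; omega) (fun b => w b - 1)
      (fun B' hB' => h B' (hB'.trans hBX)) rfl
    have := card_add_card_add_weightedCardSub_le_sum_fiber_zero subset_rfl hBX hwB hπB
    rw [← hsum]
    linarith
  have outer_bound : 2 * affineDim 𝕜 (X.image π) * s ≤
      ∑ v ∈ X - X with π v ≠ 0, maxPairWeight X w v := by
    rw [← hsB]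
    exact (Nat.mul_le_mul_right _ (two_mul_affineDim_le_card_nonzeroDiffs 𝕜
      (mem_image_of_mem π (hBX hb)))).trans
        (card_nonzeroDiffs_mul_sum_le hBX (hsB ▸ hspos) hπB)
  rw [weightedCardSub, ← sum_filter_add_sum_filter_not (X - X) (π · = 0),
    ← affineDim_image_mkQ_vectorSpan_add 𝕜 hBX]
  linarith

lemma affineDim_add_one_mul_sum_le_weightedCardSub {X : Finset V} (w : V → ℕ) (hX : X.Nonempty)
    (h : ∀ B ⊆ X, B.Nonempty → affineDim 𝕜 B * #B ≤ #(B - B)) :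
    (affineDim 𝕜 X + 1) * ∑ x ∈ X, w x ≤ weightedCardSub X w := by
  obtain h0 | hpos := (affineDim 𝕜 X).eq_zero_or_pos
  · simpa [h0] using sum_le_weightedCardSub hX
  · exact (Nat.mul_le_mul_right _ (by omega)).trans
      (two_mul_affineDim_mul_sum_le_weightedCardSub 𝕜 w h)

lemma card_add_affineDim_add_one_mul_sum_le_sum_fiber_zero {Q F : Type*} [AddCommGroup Q]
    [DecidableEq Q] [FunLike F V Q] [AddMonoidHomClass F V Q] {π : F} {c : Q} {B S X : Finset V}
    {w : V → ℕ} (hne : B.Nonempty) (hBS : B ⊆ S) (hSX : S ⊆ X) (hw : ∀ b ∈ B, 1 ≤ w b)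
    (hc : ∀ x ∈ S, π x = c)
    (h : ∀ B' ⊆ B, B'.Nonempty → affineDim 𝕜 B' * #B' + 1 ≤ #(B' - B')) :
    #S + (affineDim 𝕜 B + 1) * ∑ b ∈ B, w b ≤ ∑ v ∈ X - X with π v = 0, maxPairWeight X w v := by
  have := IsAddTorsionFree.of_isTorsionFree 𝕜 V
  have hB := h B subset_rfl hne
  have hSB := card_add_card_le_card_sub_add_one_s5 (hne.mono hBS) hne
  have hlayer := affineDim_add_one_mul_sum_le_weightedCardSub 𝕜 (fun b => w b - 1) hne
    fun B' hB' hne' => (Nat.le_succ _).trans (h B' hB' hne')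
  have := card_add_card_add_weightedCardSub_le_sum_fiber_zero hBS hSX hw hc
  rw [← sum_sub_one_add_card hw]
  linarith

theorem card_add_affineDim_add_one_mul_sum_le_weightedCardSub {X : Finset V} {w : V → ℕ}
    (hw : 2 ≤ ∑ x ∈ X, w x)
    (h : ∀ B ⊆ X, B.Nonempty → affineDim 𝕜 B * #B + 1 ≤ #(B - B)) :
    #X + (affineDim 𝕜 X + 1) * ∑ x ∈ X, w x ≤ weightedCardSub X w := by
  classical
  have := IsAddTorsionFree.of_isTorsionFree 𝕜 V
  set B := {x ∈ X | w x ≠ 0}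
  have hBX : B ⊆ X := filter_subset _ _
  have hwB : ∀ b ∈ B, 1 ≤ w b := fun b hb => Nat.one_le_iff_ne_zero.2 (mem_filter.1 hb).2
  rw [← show ∑ b ∈ B, w b = ∑ x ∈ X, w x from sum_filter_ne_zero X] at hw ⊢
  obtain ⟨b, hb⟩ : B.Nonempty := nonempty_of_sum_ne_zero (by omega : ∑ b ∈ B, w b ≠ 0)
  set π := (vectorSpan 𝕜 (B : Set V)).mkQ
  have hπB : ∀ x ∈ B, π x = π b := fun x hx => mkQ_vectorSpan_eq 𝕜 hx hb
  have inner_bound : #{x ∈ X | π x = π b} + (affineDim 𝕜 B + 1) * ∑ b ∈ B, w b ≤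
      ∑ v ∈ X - X with π v = 0, maxPairWeight X w v :=
    card_add_affineDim_add_one_mul_sum_le_sum_fiber_zero 𝕜 ⟨b, hb⟩
      (fun x hx => mem_filter.2 ⟨hBX hx, hπB x hx⟩) (filter_subset _ _) hwB
      (fun x hx => (mem_filter.1 hx).2) fun B' hB' => h B' (hB'.trans hBX)
  have outer_bound : #{x ∈ X | π x ≠ π b} + affineDim 𝕜 (X.image π) * ∑ b ∈ B, w b ≤
      ∑ v ∈ X - X with π v ≠ 0, maxPairWeight X w v := by
    have hZ := two_mul_affineDim_le_card_nonzeroDiffs 𝕜 (mem_image_of_mem π (hBX hb))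
    have := card_filter_ne_add_card_nonzeroDiffs_mul_sum_le hBX (by omega : 0 < ∑ b ∈ B, w b) hπB
    nlinarith
  rw [weightedCardSub, ← sum_filter_add_sum_filter_not (X - X) (π · = 0),
    ← affineDim_image_mkQ_vectorSpan_add 𝕜 hBX,
    ← card_filter_add_card_filter_not (s := X) (π · = π b)]
  linarith

lemma affineDim_mul_card_add_one_le_of_image_mkQ {A : Finset V} {v : V}
    [DecidableEq (V ⧸ Submodule.span 𝕜 {v})] (hv : v ≠ 0) (hA : 2 ≤ #(A ∩ (v +ᵥ A)))
    (h : ∀ B ⊆ A.image (Submodule.span 𝕜 {v}).mkQ, B.Nonempty →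
      affineDim 𝕜 B * #B + 1 ≤ #(B - B)) :
    affineDim 𝕜 A * #A + 1 ≤ #(A - A) := by
  have := IsAddTorsionFree.of_isTorsionFree 𝕜 V
  have hne : (A ∩ (v +ᵥ A)).Nonempty := card_pos.1 (by omega)
  set π := (Submodule.span 𝕜 {v}).mkQ
  have hπ : π v = 0 := by simp [π]
  set X := A.image π
  set w : V ⧸ Submodule.span 𝕜 {v} → ℕ := fun x => #{a ∈ A | π a = x}
  have hwX : ∀ x ∈ X, 1 ≤ w x := fun x hx => card_pos.2 (fiber_nonempty_iff_mem_image.2 hx)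
  have hdim : affineDim 𝕜 X + 1 = affineDim 𝕜 A :=
    affineDim_image_mkQ_span_singleton_add_one 𝕜 hv (mem_vectorSpan_of_inter_vadd_nonempty 𝕜 hne)
  have hsum : ∑ x ∈ X, (w x - 1) + #X = #A :=
    (sum_sub_one_add_card hwX).trans (card_eq_sum_card_image π A).symm
  have hX := h X subset_rfl ((hne.mono inter_subset_left).image π)
  have hcard : #X + 2 ≤ #A :=
    (Nat.add_le_add_left hA _).trans (card_image_add_card_inter_vadd_le hv hπ A)
  have fibers : weightedCardSub X w ≤ #(A - A) + #(X - X) := weightedCardSub_card_fiber_le π A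
  have layer : #(X - X) + #(X - X) + weightedCardSub X (fun x => w x - 1) ≤ weightedCardSub X w :=
    card_add_card_add_weightedCardSub_le subset_rfl subset_rfl hwX
  have rest := card_add_affineDim_add_one_mul_sum_le_weightedCardSub 𝕜 (w := fun x => w x - 1)
    (by omega) h
  rw [← hdim, ← hsum]
  linarith

theorem affineDim_mul_card_add_one_le_card_sub {A : Finset V} (hA : A.Nonempty) :
    affineDim 𝕜 A * #A + 1 ≤ #(A - A) := by
  classical
  induction hk : affineDim 𝕜 A using Nat.strong_induction_on generalizing V with
  | _ k ih =>
  subst hk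
  by_cases! hrep : ∃ v : V, v ≠ 0 ∧ 2 ≤ #(A ∩ (v +ᵥ A))
  · obtain ⟨v, hv, hcard⟩ := hrep
    have hvA := mem_vectorSpan_of_inter_vadd_nonempty 𝕜 (card_pos.1 (zero_lt_two.trans_le hcard))
    have hdim := affineDim_image_mkQ_span_singleton_add_one 𝕜 hv hvA
    refine affineDim_mul_card_add_one_le_of_image_mkQ 𝕜 hv hcard fun B hB hne => ?_
    exact ih _ (((affineDim_mono 𝕜 hB).trans_lt (Nat.lt_succ_self _)).trans_eq hdim) hne rfl
  · have hsidon := card_mul_card_add_one_le_of_card_inter_vadd_le_one hA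
      fun v hv => Nat.le_of_lt_succ (hrep v hv)
    have hdim := Nat.mul_le_mul_right #A (affineDim_add_one_le_card 𝕜 hA)
    linarith

theorem two_mul_affineDim_sub_one_mul_card_le {A : Finset V} {e : V}
    [DecidableEq (V ⧸ Submodule.span 𝕜 {e})] (he : e ≠ 0) (heA : e ∈ vectorSpan 𝕜 (A : Set V)) :
    2 * (affineDim 𝕜 A - 1) * #A ≤ #(A - A) + #((A - A).image (Submodule.span 𝕜 {e}).mkQ) := by
  have := IsAddTorsionFree.of_isTorsionFree 𝕜 V
  set π := (Submodule.span 𝕜 {e}).mkQ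
  calc 2 * (affineDim 𝕜 A - 1) * #A
      = 2 * affineDim 𝕜 (A.image π) * ∑ x ∈ A.image π, #{a ∈ A | π a = x} := by
        rw [← card_eq_sum_card_image, ← affineDim_image_mkQ_span_singleton_add_one 𝕜 he heA,
          Nat.add_sub_cancel]
    _ ≤ weightedCardSub (A.image π) fun x => #{a ∈ A | π a = x} :=
        two_mul_affineDim_mul_sum_le_weightedCardSub 𝕜 _ fun B _ hB =>
          (Nat.le_succ _).trans (affineDim_mul_card_add_one_le_card_sub 𝕜 hB)
    _ ≤ #(A - A) + #((A - A).image π) := by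
        rw [image_sub_eq]
        exact weightedCardSub_card_fiber_le π A

end AffineDim

/-! ### Small doubling -/

section SmallDoubling

variable {V : Type*} [AddCommGroup V] [DecidableEq V] {A B X : Finset V}

lemma exists_card_le_pow_five_sub_add_sub_subset {K : ℕ} (hA : A.Nonempty)
    (hK : #(A - A) ≤ K * #A) :
    ∃ X : Finset V, #X ≤ K ^ 5 ∧ (A - A) + (A - A) ⊆ X + (A - A) := by
  have hsum : (A - A) + (A - A) + A = 3 • A - 2 • A := by
    simp only [succ_nsmul, zero_nsmul, zero_add, sub_eq_add_neg, neg_add]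
    ac_rfl
  have hratio : (#(A - A) / #A : ℚ≥0) ≤ K := by
    rw [div_le_iff₀ (mod_cast hA.card_pos)]
    exact mod_cast hK
  have hcard : (#(3 • A - 2 • A) : ℚ≥0) ≤ K ^ 5 * #A :=
    (pluennecke_ruzsa_inequality_nsmul_sub_nsmul_sub hA A 3 2).trans (by gcongr)
  obtain ⟨X, -, hX, hcover⟩ := ruzsa_covering_add (A := (A - A) + (A - A)) (K := (K : ℝ) ^ 5) hA
    (by rw [hsum]; exact mod_cast hcard)
  exact ⟨X, mod_cast hX, hcover⟩

lemma card_nsmul_le_succ_pow_card (X : Finset V) (n : ℕ) : #(n • X) ≤ (n + 1) ^ #X := by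
  let combo (k : X → ℕ) : V := ∑ x, k x • (x : V)
  have hsub : n • X ⊆ (Fintype.piFinset fun _ : X => range (n + 1)).image combo := by
    induction n with
    | zero =>
      rw [zero_nsmul, zero_subset]
      exact mem_image.2 ⟨0, Fintype.mem_piFinset.2 (by simp), by simp [combo]⟩
    | succ n ih =>
      intro z hz
      obtain ⟨y, hy, x, hx, rfl⟩ := mem_add.1 (succ_nsmul X n ▸ hz)
      obtain ⟨k, hk, rfl⟩ := mem_image.1 (ih hy)
      simp only [Fintype.mem_piFinset, mem_range] at hk
      refine mem_image.2 ⟨k + Pi.single ⟨x, hx⟩ 1, ?_, ?_⟩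
      · simp only [Fintype.mem_piFinset, mem_range, Pi.add_apply]
        intro t
        have := hk t
        have : (Pi.single ⟨x, hx⟩ 1 : X → ℕ) t ≤ 1 := by rw [Pi.single_apply]; split_ifs <;> simp
        omega
      · simp [combo, add_smul, sum_add_distrib, Pi.single_apply]
  calc #(n • X) ≤ #(Fintype.piFinset fun _ : X => range (n + 1)) :=
        (card_le_card hsub).trans card_image_le
    _ = (n + 1) ^ #X := by simp

lemma card_succ_nsmul_le (h : B + B ⊆ X + B) (n : ℕ) : #((n + 1) • B) ≤ (n + 1) ^ #X * #B := by
  have hsub : (n + 1) • B ⊆ n • X + B := by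
    induction n with
    | zero => simp
    | succ n ih =>
      calc (n + 1 + 1) • B = (n + 1) • B + B := succ_nsmul B (n + 1)
        _ ⊆ n • X + B + B := by gcongr
        _ = n • X + (B + B) := add_assoc _ _ _
        _ ⊆ n • X + (X + B) := by gcongr
        _ = (n + 1) • X + B := by rw [← add_assoc, succ_nsmul]
  calc #((n + 1) • B) ≤ #(n • X) * #B := (card_le_card hsub).trans card_add_le
    _ ≤ (n + 1) ^ #X * #B := by gcongr; exact card_nsmul_le_succ_pow_card X n

/-- Doubling a point of `B` stays in `B` up to a shift from `X`; two points with the same first `m`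
shifts have a difference all of whose first `m` doublings lie in `B - B`. -/
lemma exists_ne_zero_forall_two_pow_nsmul_mem_sub {m : ℕ} (h : B + B ⊆ X + B)
    (hm : #X ^ m < #B) : ∃ e ∈ B - B, e ≠ 0 ∧ ∀ i ≤ m, 2 ^ i • e ∈ B - B := by
  have hsplit : ∀ b ∈ B, ∃ x ∈ X, ∃ y ∈ B, x + y = b + b := fun b hb =>
    mem_add.1 (h (add_mem_add hb hb))
  choose! shift hshift step hnext hdouble using hsplit
  have hmaps : Set.MapsTo step B B := hnext
  have hiter (i : ℕ) : ∀ b ∈ B, step^[i] b ∈ B := hmaps.iterate i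
  obtain ⟨b, hb, b', hb', hne, heq⟩ := exists_ne_map_eq_of_card_lt_of_maps_to
    (s := B) (t := Fintype.piFinset fun _ : Fin m => X) (f := fun b i => shift (step^[i] b))
    (by simpa using hm)
    (fun b hb => mem_coe.2 (Fintype.mem_piFinset.2 fun i => hshift _ (hiter i b hb)))
  have hpow : ∀ i ≤ m, 2 ^ i • (b - b') = step^[i] b - step^[i] b' := by
    intro i hi
    induction i with
    | zero => simp
    | succ i ih =>
      have hb2 := hdouble _ (hiter i b hb)
      have hb2' := hdouble _ (hiter i b' hb')
      have hsame : shift (step^[i] b) = shift (step^[i] b') := congrFun heq ⟨i, hi⟩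
      rw [pow_succ', mul_smul, ih (by omega), Function.iterate_succ_apply',
        Function.iterate_succ_apply', two_nsmul, sub_add_sub_comm, ← hb2, ← hb2', hsame,
        add_sub_add_left_eq_sub]
  exact ⟨b - b', sub_mem_sub hb hb', sub_ne_zero.2 hne, fun i hi =>
    hpow i hi ▸ sub_mem_sub (hiter i b hb) (hiter i b' hb')⟩

lemma nsmul_mem_nsmul_of_forall_two_pow_nsmul_mem {m j : ℕ} {e : V} (h0 : 0 ∈ B)
    (h : ∀ i < m, 2 ^ i • e ∈ B) (hj : j < 2 ^ m) : j • e ∈ m • B := by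
  induction m generalizing j with
  | zero => simp_all
  | succ m ih =>
    rw [succ_nsmul]
    obtain hlt | hge := lt_or_ge j (2 ^ m)
    · exact add_zero (j • e) ▸ add_mem_add (ih (fun i hi => h i (by omega)) hlt) h0
    · obtain ⟨i, rfl⟩ := Nat.exists_eq_add_of_le' hge
      rw [add_smul]
      exact add_mem_add (ih (fun i hi => h i (by omega)) (by omega)) (h m (by omega))

variable {Q F : Type*} [AddCommGroup Q] [DecidableEq Q] [FunLike F V Q] [AddMonoidHomClass F V Q]
  {π : F}

lemma card_image_mul_card_le_card_add {P : Finset V} (hP : ∀ p ∈ P, π p = 0) (B : Finset V) :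
    #(B.image π) * #P ≤ #(B + P) := by
  have hmaps : ∀ v ∈ B + P, π v ∈ B.image π := by
    intro v hv
    obtain ⟨b, hb, p, hp, rfl⟩ := mem_add.1 hv
    rw [map_add, hP p hp, add_zero]
    exact mem_image_of_mem π hb
  rw [mul_comm]
  refine mul_card_image_le_card_of_maps_to hmaps _ fun y hy => ?_
  obtain ⟨b, hb, rfl⟩ := mem_image.1 hy
  rw [← card_vadd_finset b P]
  refine card_le_card fun v hv => ?_
  obtain ⟨p, hp, rfl⟩ := mem_vadd_finset.1 hv
  exact mem_filter.2 ⟨add_mem_add hb hp, by simp [hP p hp]⟩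

lemma card_image_mul_two_pow_le [IsAddTorsionFree V] {m : ℕ} {e : V} (he : e ≠ 0) (hπ : π e = 0)
    (hB : B.Nonempty) (h : ∀ i < m, 2 ^ i • e ∈ B - B) :
    #(B.image π) * 2 ^ m ≤ #(B + m • (B - B)) := by
  have hinj : Function.Injective fun j : ℕ => j • e :=
    injective_nsmul_iff_not_isOfFinAddOrder.2 (not_isOfFinAddOrder_of_isAddTorsionFree he)
  set P := (range (2 ^ m)).image fun j : ℕ => j • e
  have hP : P ⊆ m • (B - B) := image_subset_iff.2 fun j hj =>
    nsmul_mem_nsmul_of_forall_two_pow_nsmul_mem hB.zero_mem_sub h (mem_range.1 hj)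
  calc #(B.image π) * 2 ^ m = #(B.image π) * #P := by
        rw [card_image_of_injective _ hinj, card_range]
    _ ≤ #(B + P) := card_image_mul_card_le_card_add (by simp [P, hπ]) B
    _ ≤ #(B + m • (B - B)) := by gcongr

end SmallDoubling

section FewLines

variable (𝕜 : Type*) {V : Type*} [DivisionRing 𝕜] [AddCommGroup V] [Module 𝕜 V]
variable [CharZero 𝕜] [DecidableEq V]

theorem two_mul_affineDim_sub_one_mul_card_mul_two_pow_le {A : Finset V} {K m : ℕ}
    (hA : A.Nonempty) (hK : #(A - A) ≤ K * #A) (hm : (K ^ 5) ^ m < #A) :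
    2 * (affineDim 𝕜 A - 1) * #A * 2 ^ m ≤
      #(A - A) * 2 ^ m + (2 * m + 1) ^ K ^ 5 * (K * #A) := by
  classical
  have := IsAddTorsionFree.of_isTorsionFree 𝕜 V
  obtain ⟨X, hX, hcover⟩ := exists_card_le_pow_five_sub_add_sub_subset hA hK
  obtain ⟨e, he, he0, hpow⟩ := exists_ne_zero_forall_two_pow_nsmul_mem_sub (m := m) hcover <|
    calc #X ^ m ≤ (K ^ 5) ^ m := by gcongr
      _ < #A := hm
      _ ≤ #(A - A) := card_le_card_sub_right hA
  have hspan : ∀ v ∈ A - A, v ∈ vectorSpan 𝕜 (A : Set V) := by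
    intro v hv
    obtain ⟨a, ha, b, hb, rfl⟩ := mem_sub.1 hv
    exact vsub_mem_vectorSpan 𝕜 (mem_coe.2 ha) (mem_coe.2 hb)
  have heA : e ∈ vectorSpan 𝕜 (A : Set V) := by
    obtain ⟨v, hv, v', hv', rfl⟩ := mem_sub.1 he
    exact sub_mem (hspan v hv) (hspan v' hv')
  set π := (Submodule.span 𝕜 {e}).mkQ
  have few_lines : #((A - A).image π) * 2 ^ m ≤ (2 * m + 1) ^ K ^ 5 * (K * #A) :=
    calc #((A - A).image π) * 2 ^ m ≤ #((A - A) + m • ((A - A) - (A - A))) :=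
          card_image_mul_two_pow_le he0 (by simp [π]) (hA.sub hA) fun i hi => hpow i hi.le
      _ = #((2 * m + 1) • (A - A)) := by
          rw [sub_eq_add_neg (A - A) (A - A), neg_sub, ← two_nsmul, ← mul_nsmul, succ_nsmul',
            mul_comm]
      _ ≤ (2 * m + 1) ^ #X * #(A - A) := card_succ_nsmul_le hcover _
      _ ≤ (2 * m + 1) ^ K ^ 5 * (K * #A) := by gcongr; omega
  calc 2 * (affineDim 𝕜 A - 1) * #A * 2 ^ m
      ≤ (#(A - A) + #((A - A).image π)) * 2 ^ m := by
        gcongr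
        exact two_mul_affineDim_sub_one_mul_card_le 𝕜 he0 heA
    _ ≤ #(A - A) * 2 ^ m + (2 * m + 1) ^ K ^ 5 * (K * #A) := by
        rw [add_mul]
        gcongr

end FewLines

lemma exists_pow_le_mul_pow {s : ℝ} (hs : 1 < s) (r : ℕ) :
    ∃ c : ℝ, 0 < c ∧ ∀ n : ℕ, (n : ℝ) ^ r ≤ c * s ^ n := by
  obtain ⟨c, hc⟩ := (tendsto_pow_const_div_const_pow_of_one_lt r hs).bddAbove_range
  refine ⟨max c 1, by positivity, fun n => (div_le_iff₀ (by positivity)).1 ?_⟩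
  exact (hc ⟨n, rfl⟩).trans (le_max_left c 1)

/-- Take `m` about `log n / log (r + 2)`: the polynomial factor is at most a multiple of
`(5 / 4) ^ (2 * m)`, the factor `n ^ δ` is at most `(5 / 4) ^ (m + 1)`, and `(5 / 4) ^ 3 ≤ 2`. -/
lemma exists_pow_mul_le_mul_two_pow_mul_rpow (r : ℕ) :
    ∃ δ : ℝ, 0 < δ ∧ ∃ C : ℝ, 0 < C ∧ ∀ n : ℕ, 1 < n →
      ∃ m : ℕ, r ^ m < n ∧ (2 * m + 1 : ℝ) ^ r * n ≤ C * 2 ^ m * (n : ℝ) ^ (1 - δ) := by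
  obtain ⟨c, hc, hpow⟩ := exists_pow_le_mul_pow (by norm_num : (1 : ℝ) < 5 / 4) r
  set R := r + 2
  have hR : (1 : ℝ) < R := by norm_cast; omega
  set δ := Real.logb R (5 / 4)
  have hδ : 0 < δ := Real.logb_pos hR (by norm_num)
  refine ⟨δ, hδ, c * (5 / 4) ^ 2, by positivity, fun n hn => ⟨Nat.log R (n - 1), ?_, ?_⟩⟩
  · calc r ^ Nat.log R (n - 1) ≤ R ^ Nat.log R (n - 1) := by gcongr; omega
      _ ≤ n - 1 := Nat.pow_log_le_self R (by omega)
      _ < n := by omega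
  set m := Nat.log R (n - 1)
  have hn_le : n ≤ R ^ (m + 1) :=
    Nat.le_of_pred_lt (Nat.lt_pow_succ_log_self (by omega : 1 < R) (n - 1))
  have hnδ : (n : ℝ) ^ δ ≤ (5 / 4) ^ (m + 1) :=
    calc (n : ℝ) ^ δ ≤ ((R : ℝ) ^ (m + 1)) ^ δ := by
          gcongr
          exact mod_cast hn_le
      _ = ((R : ℝ) ^ δ) ^ (m + 1) := (Real.rpow_pow_comm (by positivity) _ _).symm
      _ = (5 / 4) ^ (m + 1) := by rw [Real.rpow_logb (by positivity) hR.ne' (by norm_num)]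
  calc (2 * m + 1 : ℝ) ^ r * n = (2 * m + 1 : ℝ) ^ r * (n : ℝ) ^ δ * (n : ℝ) ^ (1 - δ) := by
        rw [mul_assoc, ← Real.rpow_add (by positivity), add_sub_cancel, Real.rpow_one]
    _ ≤ c * (5 / 4) ^ (2 * m + 1) * (5 / 4) ^ (m + 1) * (n : ℝ) ^ (1 - δ) := by
        gcongr
        exact mod_cast hpow (2 * m + 1)
    _ = c * (5 / 4) ^ 2 * ((5 / 4) ^ 3) ^ m * (n : ℝ) ^ (1 - δ) := by rw [← pow_mul]; ring
    _ ≤ c * (5 / 4) ^ 2 * 2 ^ m * (n : ℝ) ^ (1 - δ) := by gcongr; norm_num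

theorem stmt_5_general.{u, v} (d : ℕ) :
    ∃ δ : ℝ, 0 < δ ∧ ∃ C : ℝ, 0 < C ∧
      ∀ (𝕜 : Type u) (V : Type v) [DivisionRing 𝕜] [CharZero 𝕜] [AddCommGroup V] [Module 𝕜 V]
        [DecidableEq V] (A : Finset V), d ≤ affineDim 𝕜 A →
        (2 * d - 2) * (#A : ℝ) - C * (#A : ℝ) ^ (1 - δ) ≤ #(A - A) := by
  set K := 2 * (d - 1)
  obtain ⟨δ, hδ, C, hC, hgrowth⟩ := exists_pow_mul_le_mul_two_pow_mul_rpow (K ^ 5)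
  refine ⟨δ, hδ, (K + 1) * C, by positivity, fun 𝕜 V _ _ _ _ _ A hdim => ?_⟩
  have hdK : (2 * d - 2 : ℝ) ≤ K := sub_le_iff_le_add.2 (mod_cast (by omega : 2 * d ≤ K + 2))
  suffices h : K * (#A : ℝ) ≤ #(A - A) + (K + 1) * C * (#A : ℝ) ^ (1 - δ) from
    sub_le_iff_le_add.2 ((mul_le_mul_of_nonneg_right hdK (#A).cast_nonneg).trans h)
  obtain hlarge | hsmall := le_or_gt (K * #A) #(A - A)
  · exact le_add_of_le_of_nonneg (mod_cast hlarge) (by positivity)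
  obtain ⟨hK0, hA0⟩ : 0 < K ∧ 0 < #A := CanonicallyOrderedAdd.mul_pos.1 (Nat.zero_lt_of_lt hsmall)
  have hA : A.Nonempty := card_pos.1 hA0
  obtain ⟨m, hm, hpow⟩ := hgrowth #A (by have := affineDim_add_one_le_card 𝕜 hA; omega)
  have hlines : K * #A * 2 ^ m ≤ #(A - A) * 2 ^ m + (2 * m + 1) ^ K ^ 5 * (K * #A) :=
    (by gcongr; omega : K * #A * 2 ^ m ≤ 2 * (affineDim 𝕜 A - 1) * #A * 2 ^ m).trans
      (two_mul_affineDim_sub_one_mul_card_mul_two_pow_le 𝕜 hA hsmall.le hm)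
  refine le_of_mul_le_mul_right ?_ (by positivity : (0 : ℝ) < 2 ^ m)
  calc K * (#A : ℝ) * 2 ^ m ≤ #(A - A) * 2 ^ m + K * ((2 * m + 1) ^ K ^ 5 * #A) := by
        rw [mul_left_comm]
        exact mod_cast hlines
    _ ≤ #(A - A) * 2 ^ m + (K + 1) * (C * 2 ^ m * (#A : ℝ) ^ (1 - δ)) := by gcongr; simp
    _ = (#(A - A) + (K + 1) * C * (#A : ℝ) ^ (1 - δ)) * 2 ^ m := by ring

theorem stmt_5 (d : ℕ) (hd : 3 ≤ d) :
    ∃ δ : ℝ, 0 < δ ∧ ∃ C : ℝ, 0 < C ∧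
      ∀ A : Finset (Fin d → ℝ), A.Nonempty →
        Module.finrank ℝ (affineSpan ℝ (A : Set (Fin d → ℝ))).direction = d →
        ((A - A).card : ℝ) ≥ (2 * d - 2) * A.card - C * (A.card : ℝ) ^ ((1 : ℝ) - δ) := by
  obtain ⟨δ, hδ, C, hC, h⟩ := stmt_5_general d
  exact ⟨δ, hδ, C, hC, fun A _ hdim =>
    h ℝ _ A (direction_affineSpan ℝ (A : Set (Fin d → ℝ)) ▸ hdim).ge⟩
end

section
/- Let A, B be finite nonempty subsets of ℝ^d with |A| ≥ |B| and dim(A+B) = d. Then |A+B| ≥ |A| + d·|B| - d(d+1)/2. -/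
/-!
Choose a linear order on the vector space that is compatible with addition, and remove the least
elements `a`, `b` of `A`, `B`, leaving `A'`, `B'`. It remains to count the new sums
`T = (A + B) \ (A' + B')`.

Since a sum `x + y` with `x ∈ A'`, `y ∈ B'` satisfies
`x + y - (a + b) = (x + b - (a + b)) + (a + y - (a + b))`, with both `x + b` and `a + y` below
`x + y`, the set `T` has the same affine span as `A + B`; so `|T| ≥ d + 1`. When the dimension
drops from `A + B` to `A' + B'`, there are more new sums: for a drop by one `A + b` or `a + B` is
contained in `T`, and for a drop by two, the maximum possible, both are, and they meet in `a + b`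
only. Induction on `|B|` closes the argument.
-/

open Finset Pointwise

section AffineSpan

open Module

variable {K V : Type*}

theorem vectorSpan_le_of_forall_vsub_mem {P : Type*} [Ring K] [AddCommGroup V] [Module K V]
    [AddTorsor V P] {s : Set P} {M : Submodule K V} (p : P) (h : ∀ x ∈ s, x -ᵥ p ∈ M) :
    vectorSpan K s ≤ M := by
  rw [vectorSpan_def, Submodule.span_le]
  rintro _ ⟨x, hx, y, hy, rfl⟩
  simpa using M.sub_mem (h x hx) (h y hy)

theorem finrank_vectorSpan_add_one_le_card [DivisionRing K] [AddCommGroup V] [Module K V]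
    {s : Finset V} (hs : s.Nonempty) :
    finrank K (vectorSpan K (s : Set V)) + 1 ≤ #s := by
  classical
  obtain ⟨n, hn⟩ := Nat.exists_eq_add_one.2 hs.card_pos
  have h := finrank_vectorSpan_image_finset_le K id s hn
  rw [image_id] at h
  lia

theorem sub_add_mem_of_mem_affineSubspace [Ring K] [AddCommGroup V] [Module K V]
    {Q : AffineSubspace K V} {x y z : V} (hx : x ∈ Q) (hy : y ∈ Q) (hz : z ∈ Q) :
    x - y + z ∈ Q := by
  simpa only [one_smul, vsub_eq_sub, vadd_eq_add] using Q.smul_vsub_vadd_mem 1 hx hy hz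

theorem vectorSpan_insert_add_insert_le [Ring K] [AddCommGroup V] [Module K V] {s t : Set V}
    {a₀ b₀ : V} (ha₀ : a₀ ∈ s) (hb₀ : b₀ ∈ t) (a b : V) :
    vectorSpan K (insert a s + insert b t) ≤
      vectorSpan K (insert (a + b₀) (insert (a₀ + b) (s + t))) := by
  set S := insert (a + b₀) (insert (a₀ + b) (s + t))
  have hbase : a₀ + b₀ ∈ S := .inr (.inr (Set.add_mem_add ha₀ hb₀))
  have hleft : ∀ x ∈ insert a s, x + b₀ ∈ S := by
    rintro x (rfl | hx)
    exacts [.inl rfl, .inr (.inr (Set.add_mem_add hx hb₀))]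
  have hright : ∀ y ∈ insert b t, a₀ + y ∈ S := by
    rintro y (rfl | hy)
    exacts [.inr (.inl rfl), .inr (.inr (Set.add_mem_add ha₀ hy))]
  refine vectorSpan_le_of_forall_vsub_mem (a₀ + b₀) ?_
  rintro _ ⟨x, hx, y, hy, rfl⟩
  have hsplit : x + y - (a₀ + b₀) = (x + b₀ - (a₀ + b₀)) + (a₀ + y - (a₀ + b₀)) := by abel
  simpa only [vsub_eq_sub, hsplit] using add_mem
    (vsub_mem_vectorSpan K (hleft x hx) hbase) (vsub_mem_vectorSpan K (hright y hy) hbase)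

variable [DivisionRing K] [AddCommGroup V] [Module K V] {s t : Set V}
  [FiniteDimensional K (vectorSpan K (s + t))] {a b a₀ b₀ : V}

theorem finrank_vectorSpan_insert_add_insert_le (hs : s.Nonempty) (ht : t.Nonempty) (a b : V) :
    finrank K (vectorSpan K (insert a s + insert b t)) ≤
      finrank K (vectorSpan K (s + t)) + 2 := by
  obtain ⟨a₀, ha₀⟩ := hs
  obtain ⟨b₀, hb₀⟩ := ht
  grw [Submodule.finrank_mono (vectorSpan_insert_add_insert_le ha₀ hb₀ a b),
    finrank_vectorSpan_insert_le_set, finrank_vectorSpan_insert_le_set]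

theorem add_notMem_affineSpan_or_of_finrank_lt (ha₀ : a₀ ∈ s) (hb₀ : b₀ ∈ t)
    (h : finrank K (vectorSpan K (s + t)) <
      finrank K (vectorSpan K (insert a s + insert b t))) :
    a + b₀ ∉ affineSpan K (s + t) ∨ a₀ + b ∉ affineSpan K (s + t) := by
  contrapose! h
  obtain ⟨ha, hb⟩ := h
  have ha' : a + b₀ ∈ affineSpan K (insert (a₀ + b) (s + t)) :=
    affineSpan_mono K (Set.subset_insert _ _) ha
  grw [Submodule.finrank_mono (vectorSpan_insert_add_insert_le ha₀ hb₀ a b),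
    vectorSpan_insert_eq_vectorSpan ha', vectorSpan_insert_eq_vectorSpan hb]

theorem add_notMem_affineSpan_and_of_finrank_add_one_lt (ha₀ : a₀ ∈ s) (hb₀ : b₀ ∈ t)
    (h : finrank K (vectorSpan K (s + t)) + 1 <
      finrank K (vectorSpan K (insert a s + insert b t))) :
    a + b₀ ∉ affineSpan K (insert (a₀ + b) (s + t)) ∧ a₀ + b ∉ affineSpan K (s + t) := by
  contrapose! h
  grw [Submodule.finrank_mono (vectorSpan_insert_add_insert_le ha₀ hb₀ a b)]
  by_cases ha : a + b₀ ∈ affineSpan K (insert (a₀ + b) (s + t))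
  · grw [vectorSpan_insert_eq_vectorSpan ha, finrank_vectorSpan_insert_le_set]
  · grw [finrank_vectorSpan_insert_le_set, vectorSpan_insert_eq_vectorSpan (h ha)]

end AffineSpan

/-- The sums gained when the points `a` and `b` are adjoined to the summands `A` and `B`. Their
number is the growth of the sumset in the induction on `|B|`. -/
def newSums {V : Type*} [Add V] [DecidableEq V] (a b : V) (A B : Finset V) : Finset V :=
  (insert a A + insert b B) \ (A + B)

theorem card_newSums_add_card_add {V : Type*} [Add V] [DecidableEq V] (a b : V) (A B : Finset V) :
    #(newSums a b A B) + #(A + B) = #(insert a A + insert b B) :=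
  card_sdiff_add_card_eq_card (add_subset_add (subset_insert a A) (subset_insert b B))

theorem newSums_comm {V : Type*} [AddCommSemigroup V] [DecidableEq V] (a b : V) (A B : Finset V) :
    newSums a b A B = newSums b a B A := by
  rw [newSums, newSums, add_comm A, add_comm (insert a A)]

section NotMemAffineSpan

variable {K V : Type*} [Ring K] [AddCommGroup V] [Module K V] [DecidableEq V]
  {A B : Finset V} {a b a₀ b₀ : V}

theorem insert_add_singleton_subset_newSums (hab : a + b ∉ A + B) (ha₀ : a₀ ∈ A) (hb₀ : b₀ ∈ B)
    (h : a₀ + b ∉ affineSpan K (A + B : Set V)) : insert a A + {b} ⊆ newSums a b A B := by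
  refine fun z hz ↦ mem_sdiff.2 ⟨add_subset_add_left (by simp) hz, fun hzAB ↦ ?_⟩
  simp only [mem_add, mem_singleton, exists_eq_left, mem_insert, exists_eq_or_imp] at hz
  obtain rfl | ⟨x, hx, rfl⟩ := hz
  · exact hab hzAB
  · have hmem {u v : V} (hu : u ∈ A) (hv : v ∈ B) : u + v ∈ affineSpan K (A + B : Set V) :=
      subset_affineSpan K _ (Set.add_mem_add hu hv)
    rw [← mem_coe, coe_add] at hzAB
    have hsplit : a₀ + b = (a₀ + b₀) - (x + b₀) + (x + b) := by abel
    exact h (hsplit ▸ sub_add_mem_of_mem_affineSubspace (hmem ha₀ hb₀) (hmem hx hb₀)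
      (subset_affineSpan K _ hzAB))

theorem singleton_add_insert_subset_newSums (hab : a + b ∉ A + B) (ha₀ : a₀ ∈ A) (hb₀ : b₀ ∈ B)
    (h : a + b₀ ∉ affineSpan K (A + B : Set V)) : {a} + insert b B ⊆ newSums a b A B := by
  rw [add_comm a, add_comm A] at hab
  rw [add_comm a, add_comm (A : Set V)] at h
  rw [add_comm, newSums_comm]
  exact insert_add_singleton_subset_newSums hab hb₀ ha₀ h

theorem insert_add_singleton_inter_singleton_add_insert_subset (ha₀ : a₀ ∈ A) (hb₀ : b₀ ∈ B)
    (h : a + b₀ ∉ affineSpan K (insert (a₀ + b) (A + B : Set V))) :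
    (insert a A + {b}) ∩ ({a} + insert b B) ⊆ {a + b} := by
  intro z hz
  simp only [mem_inter, mem_add, mem_singleton, exists_eq_left, mem_insert,
    exists_eq_or_imp] at hz
  obtain ⟨rfl | ⟨x, hx, rfl⟩, hzb | ⟨y, hy, hxy⟩⟩ := hz
  · exact mem_singleton_self _
  · exact mem_singleton_self _
  · exact mem_singleton.2 hzb.symm
  · have hmem {u v : V} (hu : u ∈ A) (hv : v ∈ B) :
        u + v ∈ affineSpan K (insert (a₀ + b) (A + B : Set V)) :=
      subset_affineSpan K _ (.inr (Set.add_mem_add hu hv))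
    have hsplit : a + b₀ = (x + b₀) - (a₀ + y) + (a₀ + b) := by
      rw [← sub_eq_zero, ← sub_eq_zero.2 hxy]
      abel
    exact absurd (hsplit ▸ sub_add_mem_of_mem_affineSubspace (hmem hx hb₀) (hmem ha₀ hy)
      (subset_affineSpan K _ (.inl rfl))) h

end NotMemAffineSpan

section CardNewSums

open Module

variable (K : Type*) {V : Type*} [DivisionRing K] [AddCommGroup V] [Module K V] [DecidableEq V]
  {A B : Finset V} {a b : V}

theorem min_card_le_card_newSums (hab : a + b ∉ A + B) (hA : A.Nonempty) (hB : B.Nonempty)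
    (h : finrank K (vectorSpan K (A + B : Set V)) <
      finrank K (vectorSpan K (insert a ↑A + insert b ↑B : Set V))) :
    min #(insert a A) #(insert b B) ≤ #(newSums a b A B) := by
  obtain ⟨a₀, ha₀⟩ := hA
  obtain ⟨b₀, hb₀⟩ := hB
  rw [← mem_coe] at ha₀ hb₀
  have hfin : FiniteDimensional K (vectorSpan K (A + B : Set V)) :=
    finiteDimensional_vectorSpan_of_finite K (A.finite_toSet.add B.finite_toSet)
  obtain ha | hb := add_notMem_affineSpan_or_of_finrank_lt ha₀ hb₀ h
  · grw [← singleton_add_insert_subset_newSums hab ha₀ hb₀ ha, card_singleton_add]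
    exact min_le_right _ _
  · grw [← insert_add_singleton_subset_newSums hab ha₀ hb₀ hb, card_add_singleton]
    exact min_le_left _ _

theorem card_add_card_le_card_newSums_add_one (hab : a + b ∉ A + B) (hA : A.Nonempty)
    (hB : B.Nonempty)
    (h : finrank K (vectorSpan K (A + B : Set V)) + 1 <
      finrank K (vectorSpan K (insert a ↑A + insert b ↑B : Set V))) :
    #(insert a A) + #(insert b B) ≤ #(newSums a b A B) + 1 := by
  obtain ⟨a₀, ha₀⟩ := hA
  obtain ⟨b₀, hb₀⟩ := hB
  rw [← mem_coe] at ha₀ hb₀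
  have hfin : FiniteDimensional K (vectorSpan K (A + B : Set V)) :=
    finiteDimensional_vectorSpan_of_finite K (A.finite_toSet.add B.finite_toSet)
  obtain ⟨ha, hb⟩ := add_notMem_affineSpan_and_of_finrank_add_one_lt ha₀ hb₀ h
  have ha' : a + b₀ ∉ affineSpan K (A + B : Set V) :=
    fun hmem ↦ ha (affineSpan_mono K (Set.subset_insert _ _) hmem)
  have hinter := card_le_card
    (insert_add_singleton_inter_singleton_add_insert_subset ha₀ hb₀ ha)
  have hunion := card_le_card (union_subset
    (insert_add_singleton_subset_newSums hab ha₀ hb₀ hb)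
    (singleton_add_insert_subset_newSums hab ha₀ hb₀ ha'))
  have hcard := card_union_add_card_inter (insert a A + {b}) ({a} + insert b B)
  rw [card_add_singleton, card_singleton_add] at hcard
  rw [card_singleton] at hinter
  lia

end CardNewSums

section Ordered

open Module

variable (K : Type*) {V : Type*} [AddCommGroup V] [PartialOrder V] [IsOrderedAddMonoid V]
  [DecidableEq V] {A B : Finset V} {a b : V}

theorem add_notMem_add_of_forall_lt (ha : ∀ x ∈ A, a < x) (hb : ∀ y ∈ B, b < y) :
    a + b ∉ A + B := by
  intro h
  obtain ⟨x, hx, y, hy, hxy⟩ := mem_add.1 h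
  exact (add_lt_add (ha x hx) (hb y hy)).ne hxy.symm

theorem add_mem_newSums (ha : ∀ x ∈ A, a < x) (hb : ∀ y ∈ B, b < y) :
    a + b ∈ newSums a b A B :=
  mem_sdiff.2
    ⟨add_mem_add (mem_insert_self a A) (mem_insert_self b B), add_notMem_add_of_forall_lt ha hb⟩

theorem vectorSpan_insert_add_insert_le_vectorSpan_newSums [Ring K] [Module K V]
    (ha : ∀ x ∈ A, a < x) (hb : ∀ y ∈ B, b < y) :
    vectorSpan K (insert a ↑A + insert b ↑B : Set V) ≤ vectorSpan K (newSums a b A B : Set V) := by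
  refine vectorSpan_le_of_forall_vsub_mem (a + b) fun z hz ↦ ?_
  have hwf := (insert a A + insert b B).wellFoundedOn (r := (· < ·))
  refine hwf.induction (P := fun z ↦ z -ᵥ (a + b) ∈ _)
    (by simpa only [coe_add, coe_insert] using hz) fun z hz ih ↦ ?_
  by_cases hzAB : z ∈ A + B
  · obtain ⟨x, hx, y, hy, rfl⟩ := mem_add.1 hzAB
    have hleft := ih (x + b) (add_mem_add (mem_insert_of_mem hx) (mem_insert_self b B))
      (add_lt_add_right (hb y hy) x)
    have hright := ih (a + y) (add_mem_add (mem_insert_self a A) (mem_insert_of_mem hy))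
      (add_lt_add_left (ha x hx) y)
    have hsplit : x + y - (a + b) = (x + b - (a + b)) + (a + y - (a + b)) := by abel
    simpa only [vsub_eq_sub, hsplit] using add_mem hleft hright
  · exact vsub_mem_vectorSpan K (mem_sdiff.2 ⟨hz, hzAB⟩) (add_mem_newSums ha hb)

variable [DivisionRing K] [Module K V]

theorem finrank_vectorSpan_add_one_le_card_newSums (ha : ∀ x ∈ A, a < x) (hb : ∀ y ∈ B, b < y) :
    finrank K (vectorSpan K (insert a ↑A + insert b ↑B : Set V)) + 1 ≤
      #(newSums a b A B) := by
  have := finiteDimensional_vectorSpan_of_finite K (newSums a b A B).finite_toSet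
  have hspan := vectorSpan_insert_add_insert_le_vectorSpan_newSums K ha hb
  grw [Submodule.finrank_mono hspan,
    finrank_vectorSpan_add_one_le_card ⟨a + b, add_mem_newSums ha hb⟩]

theorem card_insert_add_finrank_mul_card_insert_le (ha : ∀ x ∈ A, a < x) (hb : ∀ y ∈ B, b < y)
    (hB : B.Nonempty) (hcard : #B ≤ #A)
    (ih : #A + finrank K (vectorSpan K (A + B : Set V)) * #B ≤
      #(A + B) + (finrank K (vectorSpan K (A + B : Set V)) + 1).choose 2) :
    #(insert a A) +
        finrank K (vectorSpan K (insert a ↑A + insert b ↑B : Set V)) * #(insert b B) ≤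
      #(insert a A + insert b B) +
        (finrank K (vectorSpan K (insert a ↑A + insert b ↑B : Set V)) + 1).choose 2 := by
  have hA : A.Nonempty := card_pos.1 (hB.card_pos.trans_le hcard)
  have hab := add_notMem_add_of_forall_lt ha hb
  have hfin : FiniteDimensional K (vectorSpan K (A + B : Set V)) :=
    finiteDimensional_vectorSpan_of_finite K (A.finite_toSet.add B.finite_toSet)
  have hfin' : FiniteDimensional K (vectorSpan K (insert a ↑A + insert b ↑B : Set V)) :=
    finiteDimensional_vectorSpan_of_finite K
      ((A.finite_toSet.insert a).add (B.finite_toSet.insert b))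
  have hsame := finrank_vectorSpan_add_one_le_card_newSums K ha hb
  have hdrop := min_card_le_card_newSums K hab hA hB
  have hdrop_two := card_add_card_le_card_newSums_add_one K hab hA hB
  have hmono : finrank K (vectorSpan K (A + B : Set V)) ≤
      finrank K (vectorSpan K (insert a ↑A + insert b ↑B : Set V)) :=
    Submodule.finrank_mono <| vectorSpan_mono K <|
      Set.add_subset_add (Set.subset_insert _ _) (Set.subset_insert _ _)
  have hle := finrank_vectorSpan_insert_add_insert_le (K := K) hA hB a b
  rw [← card_newSums_add_card_add]
  rw [card_insert_of_notMem fun h ↦ (ha a h).false,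
    card_insert_of_notMem fun h ↦ (hb b h).false] at *
  generalize finrank K (vectorSpan K (insert a ↑A + insert b ↑B : Set V)) = d at *
  generalize finrank K (vectorSpan K (A + B : Set V)) = e at *
  have hchoose (k : ℕ) : (k + 1 + 1).choose 2 = (k + 1) + (k + 1).choose 2 := by
    rw [Nat.choose_succ_succ', Nat.choose_one_right]
  obtain rfl | rfl | rfl : d = e ∨ d = e + 1 ∨ d = e + 2 := by lia
  · linarith
  · have := hdrop (by lia)
    rw [min_eq_right (by lia)] at this
    rw [hchoose]
    linarith
  · have := hdrop_two (by lia)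
    rw [hchoose, hchoose]
    linarith

end Ordered

open Module in
theorem card_add_finrank_mul_card_le_card_add_of_linearOrder (K : Type*) {V : Type*}
    [DivisionRing K] [AddCommGroup V] [Module K V] [LinearOrder V] [IsOrderedAddMonoid V]
    [DecidableEq V] {A B : Finset V} (hB : B.Nonempty) (hcard : #B ≤ #A) :
    #A + finrank K (vectorSpan K (A + B : Set V)) * #B ≤
      #(A + B) + (finrank K (vectorSpan K (A + B : Set V)) + 1).choose 2 := by
  induction B using Finset.induction_on_min generalizing A with
  | empty => exact absurd hB not_nonempty_empty
  | insert b B hb ih =>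
    obtain rfl | hB' := B.eq_empty_or_nonempty
    · simp only [insert_empty_eq, card_singleton, card_add_singleton, mul_one,
        Nat.choose_succ_succ', Nat.choose_one_right]
      lia
    have hA : A.Nonempty := card_pos.1 (hB.card_pos.trans_le hcard)
    obtain ⟨a, A, ha, rfl⟩ : ∃ a A', (∀ x ∈ A', a < x) ∧ insert a A' = A :=
      ⟨A.min' hA, A.erase (A.min' hA), fun _ ↦ A.min'_lt_of_mem_erase_min' hA,
        insert_erase (A.min'_mem hA)⟩
    rw [card_insert_of_notMem fun h ↦ (ha a h).false,
      card_insert_of_notMem fun h ↦ (hb b h).false] at hcard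
    have hcard' : #B ≤ #A := Nat.le_of_succ_le_succ hcard
    rw [coe_insert, coe_insert]
    exact card_insert_add_finrank_mul_card_insert_le K ha hb hB' hcard' (ih hB' hcard')

theorem exists_linearOrder_isOrderedAddMonoid (V : Type*) [AddCommGroup V] [Module ℚ V] :
    ∃ _ : LinearOrder V, IsOrderedAddMonoid V := by
  let basis := Module.Basis.ofVectorSpace ℚ V
  let _ := WellOrderingRel.isWellOrder.linearOrder (α := Module.Basis.ofVectorSpaceIndex ℚ V)
  let f : V → Lex (Module.Basis.ofVectorSpaceIndex ℚ V →₀ ℚ) := fun v ↦ toLex (basis.repr v)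
  let _ := LinearOrder.lift' f (toLex.injective.comp basis.repr.injective)
  exact ⟨_, Function.Injective.isOrderedAddMonoid f (fun v w ↦ by simp [f]) Iff.rfl⟩

open Module in
theorem stmt_6_general {K V : Type*} [DivisionRing K] [CharZero K] [AddCommGroup V] [Module K V]
    [DecidableEq V] {d : ℕ} (A B : Finset V) (hB : B.Nonempty) (hcard : #B ≤ #A)
    (hdim : finrank K (affineSpan K ((A + B : Finset V) : Set V)).direction = d) :
    (#(A + B) : ℤ) ≥ (#A : ℤ) + d * #B - d * (d + 1) / 2 := by
  let _ : Module ℚ V := Module.compHom V (algebraMap ℚ K)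
  obtain ⟨_, _⟩ := exists_linearOrder_isOrderedAddMonoid V
  have hbound := card_add_finrank_mul_card_le_card_add_of_linearOrder K hB hcard
  rw [← coe_add, ← direction_affineSpan, hdim, Nat.choose_two_right, Nat.add_sub_cancel,
    mul_comm (d + 1)] at hbound
  zify at hbound
  lia

theorem stmt_6 {d : ℕ} (A B : Finset (Fin d → ℝ)) (hA : A.Nonempty) (hB : B.Nonempty)
    (hcard : B.card ≤ A.card)
    (hdim : Module.finrank ℝ (affineSpan ℝ ((A + B : Finset (Fin d → ℝ)) : Set (Fin d → ℝ))).direction = d) :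
    ((A + B).card : ℤ) ≥ (A.card : ℤ) + d * B.card - d * (d + 1) / 2 :=
  stmt_6_general A B hB hcard hdim
end
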